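/- Assume f satisfies (f1) and (f2), and let α* ∈ G_k for some k ≥ 1. Then there exist a > 0 and δ₁ > 0 such that for every α ∈ (α*−δ₁, α*+δ₁) the solution u(·,α) has exactly k extremal points (zeros of u'(·,α)) in [0, T_{k−1}(α*)+a]; every extremal value E of u(·,α) there satisfies E < −β if E is a local minimum value and E > β if E is a local maximum value. Moreover, if α₁ < α₂ both lie in (α*−δ₁, α*+δ₁), then (i) the solutions u(·,α₁) and u(·,α₂) intersect between any two of their consecutive extremal points, and (ii) there exists an intersection point of u(·,α₁) and u(·,α₂) in (T_{k−1}(α*), Z_k(α*)). -/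

import Mathlib

open Set Filter MeasureTheory

namespace Paper

noncomputable section

/-- `F s = ∫₀ˢ f t dt`. -/
def Fint (f : ℝ → ℝ) (s : ℝ) : ℝ := ∫ t in (0:ℝ)..s, f t

/-- Hypothesis (f1): `f` is odd, `f 0 = 0`, there are `β > b > 0` with `f > 0` on `(b,∞)`,
`f ≤ 0`, `f ≢ 0` on `[0,b]`, and `F β = 0`. -/
def Hf1 (f : ℝ → ℝ) (b β : ℝ) : Prop :=
  (∀ s, f (-s) = -f s) ∧ f 0 = 0 ∧ 0 < b ∧ b < β ∧
    (∀ s, b < s → 0 < f s) ∧ (∀ s ∈ Icc (0:ℝ) b, f s ≤ 0) ∧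
    (∃ s ∈ Icc (0:ℝ) b, f s ≠ 0) ∧ Fint f β = 0

/-- Hypothesis (f2): `f` continuous on `[0,∞)`, C¹ on `(0,∞)`, `f' ∈ L¹(0,1)`. -/
def Hf2 (f : ℝ → ℝ) : Prop :=
  ContinuousOn f (Ici 0) ∧ (∀ s : ℝ, 0 < s → DifferentiableAt ℝ f s) ∧
    ContinuousOn (deriv f) (Ioi 0) ∧ IntegrableOn (deriv f) (Ioo 0 1)

/-- Hypothesis (f3): `f s ≥ f' s * (s - β)` for `s ≥ β`. -/
def Hf3 (f : ℝ → ℝ) (β : ℝ) : Prop := ∀ s, β ≤ s → deriv f s * (s - β) ≤ f s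

/-- Hypothesis (f4): `(F/f)' s ≥ (n-2)/(2n)` for `s > β`. -/
def Hf4 (n : ℕ) (f : ℝ → ℝ) (β : ℝ) : Prop :=
  ∀ s, β < s → ((n : ℝ) - 2) / (2 * (n : ℝ)) ≤ deriv (fun t => Fint f t / f t) s

/-- Hypothesis (f4'): `(F/f)' s ≥ (n-2)/2` for `s > β`. -/
def Hf4' (n : ℕ) (f : ℝ → ℝ) (β : ℝ) : Prop :=
  ∀ s, β < s → ((n : ℝ) - 2) / 2 ≤ deriv (fun t => Fint f t / f t) s

/-- Hypothesis (f5): `s ↦ s f' s / f s` is nonincreasing on `[β,∞)`. -/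
def Hf5 (f : ℝ → ℝ) (β : ℝ) : Prop := AntitoneOn (fun s => s * deriv f s / f s) (Ici β)

/-- Hypothesis (f6): `β f' β / f β ≤ n/(n-2)`. -/
def Hf6 (n : ℕ) (f : ℝ → ℝ) (β : ℝ) : Prop := β * deriv f β / f β ≤ (n : ℝ) / ((n : ℝ) - 2)

/-- Hypothesis (f1'): `f 0 = 0` and `s f s > 0` for `s > 0`. -/
def Hf1' (f : ℝ → ℝ) : Prop := f 0 = 0 ∧ ∀ s : ℝ, 0 < s → 0 < s * f s

/-- Hypothesis (f3'): `f s ≥ s f' s` for `s > 0`, with strict inequality at points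
arbitrarily close to `0`. -/
def Hf3' (f : ℝ → ℝ) : Prop :=
  (∀ s : ℝ, 0 < s → s * deriv f s ≤ f s) ∧
    ∀ ε : ℝ, 0 < ε → ∃ s ∈ Ioo (0:ℝ) ε, s * deriv f s < f s

/-- `v` is a C² solution of (E) on `(0,∞)`, continuous on `[0,∞)`,
with `v 0 = α` and `v' 0 = 0`. -/
def IVPsol (n : ℕ) (f : ℝ → ℝ) (α : ℝ) (v : ℝ → ℝ) : Prop :=
  v 0 = α ∧ deriv v 0 = 0 ∧ ContinuousOn v (Ici 0) ∧
    (∀ r : ℝ, 0 < r → DifferentiableAt ℝ v r ∧ DifferentiableAt ℝ (deriv v) r) ∧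
    (∀ r : ℝ, 0 < r → deriv (deriv v) r + ((n : ℝ) - 1) / r * deriv v r + f (v r) = 0)

/-- The family `α ↦ u α` of solutions of the IVP, with `u α r` and `u' α r`
continuous in `(α, r)`. -/
def Family (n : ℕ) (f : ℝ → ℝ) (u : ℝ → ℝ → ℝ) : Prop :=
  (∀ α : ℝ, 0 < α → IVPsol n f α (u α)) ∧
    ContinuousOn (fun p : ℝ × ℝ => u p.1 p.2) (Ioi 0 ×ˢ Ici 0) ∧
    ContinuousOn (fun p : ℝ × ℝ => deriv (u p.1) p.2) (Ioi 0 ×ˢ Ici 0)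

/-- The set whose supremum is `Z_k α`, given `T = T_{k-1} α`. -/
def ZsetAux (u : ℝ → ℝ → ℝ) (k : ℕ) (T α : ℝ) : Set ℝ :=
  {r | T < r ∧ ∀ s ∈ Ioo T r, (-1 : ℝ) ^ k * u α s < 0 ∧ 0 < (-1 : ℝ) ^ k * deriv (u α) s}

/-- The pair `(Z_k, T_k)`, with `T₀ = 0`;
`Z_k α = sup {r > T_{k-1} α | (-1)^k u < 0, (-1)^k u' > 0 on (T_{k-1} α, r)}` and
`T_k α = inf {r > Z_k α | u'(r, α) = 0}`. -/
def ZT (u : ℝ → ℝ → ℝ) : ℕ → (ℝ → ℝ) × (ℝ → ℝ)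
  | 0 => (fun _ => 0, fun _ => 0)
  | k + 1 =>
    let Z : ℝ → ℝ := fun α => sSup (ZsetAux u (k + 1) ((ZT u k).2 α) α)
    (Z, fun α => sInf {r | Z α < r ∧ deriv (u α) r = 0})

/-- `Z_k α` (as a real number; the genuine value when the defining set is bounded above). -/
def Zk (u : ℝ → ℝ → ℝ) (k : ℕ) (α : ℝ) : ℝ := (ZT u k).1 α

/-- `T_k α`, with `T₀ = 0`. -/
def Tk (u : ℝ → ℝ → ℝ) (k : ℕ) (α : ℝ) : ℝ := (ZT u k).2 α

/-- The defining set of `Z_k α`; `Z_k α = ∞` iff this set is unbounded above. -/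
def ZsetK (u : ℝ → ℝ → ℝ) (k : ℕ) (α : ℝ) : Set ℝ := ZsetAux u k (Tk u (k - 1) α) α

open Classical in
/-- The value of `u (·, α)` at `Z_k α`, as a limit `r → ∞` when `Z_k α = ∞`. -/
def uAtZ (u : ℝ → ℝ → ℝ) (k : ℕ) (α : ℝ) : ℝ :=
  if BddAbove (ZsetK u k α) then u α (Zk u k α) else limUnder atTop (u α)

open Classical in
/-- The value of `u' (·, α)` at `Z_k α`, as a limit `r → ∞` when `Z_k α = ∞`. -/
def duAtZ (u : ℝ → ℝ → ℝ) (k : ℕ) (α : ℝ) : ℝ :=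
  if BddAbove (ZsetK u k α) then deriv (u α) (Zk u k α) else limUnder atTop (deriv (u α))

open Classical in
/-- `Z_k α` as an extended real number. -/
def ZkE (u : ℝ → ℝ → ℝ) (k : ℕ) (α : ℝ) : WithTop ℝ :=
  if BddAbove (ZsetK u k α) then (Zk u k α : WithTop ℝ) else ⊤

/-- Membership in `F̃_k` (for `α ∈ N_{k-1}`): `(-1)^k u' (r, α) < 0` for all `r > Z_{k-1} α`. -/
def Ftil (u : ℝ → ℝ → ℝ) (k : ℕ) (α : ℝ) : Prop :=
  ∀ r, Zk u (k - 1) α < r → (-1 : ℝ) ^ k * deriv (u α) r < 0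

/-- The sets `N_k` (with `N₀ := (0,∞)`). -/
def Nk (u : ℝ → ℝ → ℝ) : ℕ → Set ℝ
  | 0 => Ioi 0
  | 1 => {α | 0 < α ∧ uAtZ u 1 α = 0 ∧ duAtZ u 1 α < 0}
  | k + 2 => {α | α ∈ Nk u (k + 1) ∧ ¬Ftil u (k + 2) α ∧ uAtZ u (k + 2) α = 0 ∧
      0 < (-1 : ℝ) ^ (k + 2) * duAtZ u (k + 2) α}

/-- The sets `G_k`. -/
def Gk (u : ℝ → ℝ → ℝ) : ℕ → Set ℝ
  | 0 => ∅
  | 1 => {α | 0 < α ∧ uAtZ u 1 α = 0 ∧ duAtZ u 1 α = 0}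
  | k + 2 => {α | α ∈ Nk u (k + 1) ∧ ¬Ftil u (k + 2) α ∧ uAtZ u (k + 2) α = 0 ∧
      duAtZ u (k + 2) α = 0}

/-- The set `F̃_k` (for `k ≥ 2`). -/
def FtilSet (u : ℝ → ℝ → ℝ) (k : ℕ) : Set ℝ := {α | α ∈ Nk u (k - 1) ∧ Ftil u k α}

/-- The set `F_k` (for `k ≥ 2`). -/
def Fk (u : ℝ → ℝ → ℝ) (k : ℕ) : Set ℝ :=
  {α | α ∈ Nk u (k - 1) ∧ ¬Ftil u k α ∧ (-1 : ℝ) ^ k * uAtZ u k α < 0}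

/-- The sets `P_k`. -/
def Pk (u : ℝ → ℝ → ℝ) : ℕ → Set ℝ
  | 0 => ∅
  | 1 => {α | 0 < α ∧ 0 < uAtZ u 1 α}
  | k + 2 => FtilSet u (k + 2) ∪ Fk u (k + 2)

/-- The set of extremal points (zeros of `u' (·, α)`) in `[0, A]`. -/
def ExtSet (u : ℝ → ℝ → ℝ) (α A : ℝ) : Set ℝ := {r | r ∈ Icc 0 A ∧ deriv (u α) r = 0}

/-- The conclusion of the δ₁-lemma (Lemma 4.1): every solution with initial value in
`(α*-δ₁, α*+δ₁)` has exactly `k` extremal points in `[0, T_{k-1}(α*) + a]`, with minimum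
values `< -β` and maximum values `> β`; moreover any two such solutions intersect between
any two of their consecutive extremal points, and in `(T_{k-1}(α*), Z_k(α*))`. -/
def DeltaOneLemma (f : ℝ → ℝ) (β : ℝ) (u : ℝ → ℝ → ℝ) (k : ℕ) (αs a δ₁ : ℝ) : Prop :=
  0 < a ∧ 0 < δ₁ ∧
    (∀ α ∈ Ioo (αs - δ₁) (αs + δ₁),
      (ExtSet u α (Tk u (k - 1) αs + a)).Finite ∧
        (ExtSet u α (Tk u (k - 1) αs + a)).ncard = k ∧
        ∀ r ∈ ExtSet u α (Tk u (k - 1) αs + a),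
          (IsLocalMin (u α) r → u α r < -β) ∧ (IsLocalMax (u α) r → β < u α r)) ∧
    ∀ α₁ ∈ Ioo (αs - δ₁) (αs + δ₁), ∀ α₂ ∈ Ioo (αs - δ₁) (αs + δ₁), α₁ < α₂ →
      (∀ i : ℕ, 1 ≤ i → i ≤ k - 1 →
        ∃ t, max (Tk u (i - 1) α₁) (Tk u (i - 1) α₂) < t ∧
          t < min (Tk u i α₁) (Tk u i α₂) ∧ u α₁ t = u α₂ t) ∧
      ∃ t, Tk u (k - 1) αs < t ∧ (BddAbove (ZsetK u k αs) → t < Zk u k αs) ∧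
        u α₁ t = u α₂ t

/-- `ρ` is the inverse of the monotone branch of `v` on `[t₁, t₂]`, whose set of values
is `[m, M]`. -/
def InvBranch (v ρ : ℝ → ℝ) (t₁ t₂ m M : ℝ) : Prop :=
  (∀ s ∈ Icc m M, ρ s ∈ Icc t₁ t₂ ∧ v (ρ s) = s) ∧
    ∀ s ∈ Ioo m M, HasDerivAt ρ (1 / deriv v (ρ s)) s

/-- `ρ` inverts a decreasing branch of `v` over the value interval `[m, M]`, along which
`(v')² + 2F > 0`. -/
def DecBranchInv (f : ℝ → ℝ) (v ρ : ℝ → ℝ) (m M : ℝ) : Prop :=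
  ∀ s ∈ Icc m M, 0 ≤ ρ s ∧ v (ρ s) = s ∧ deriv v (ρ s) < 0 ∧
    HasDerivAt ρ (1 / deriv v (ρ s)) s ∧ 0 < (deriv v (ρ s)) ^ 2 + 2 * Fint f s

/-- The functional `Q(s) = -4 (F/f)(s) r/r' - r²/(r')² - 2 r² F(s) + H(s)` computed along
the branch inverse `ρ`. -/
def Qfun (f H ρ : ℝ → ℝ) (s : ℝ) : ℝ :=
  -4 * (Fint f s / f s) * (ρ s / deriv ρ s) - (ρ s) ^ 2 / (deriv ρ s) ^ 2 -
    2 * (ρ s) ^ 2 * Fint f s + H s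

/-- The functional `P(s) = -2n (F/f)(s) r^{n-1}/r' - r^n/(r')² - 2 r^n F(s)`. -/
def Pfun (n : ℕ) (f : ℝ → ℝ) (ρ : ℝ → ℝ) (s : ℝ) : ℝ :=
  -(2 * (n : ℝ)) * (Fint f s / f s) * (ρ s ^ (n - 1) / deriv ρ s) -
    ρ s ^ n / (deriv ρ s) ^ 2 - 2 * ρ s ^ n * Fint f s

/-- The functional `W(s) = r(s) √((u'(r(s)))² + 2 F(s))`. -/
def Wfun (f v ρ : ℝ → ℝ) (s : ℝ) : ℝ :=
  ρ s * Real.sqrt ((deriv v (ρ s)) ^ 2 + 2 * Fint f s)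

/-- The functional `W̃(s) = r(s)^{n-1} √((u'(r(s)))² + 2 F(s))`. -/
def Wtil (n : ℕ) (f : ℝ → ℝ) (v ρ : ℝ → ℝ) (s : ℝ) : ℝ :=
  ρ s ^ (n - 1) * Real.sqrt ((deriv v (ρ s)) ^ 2 + 2 * Fint f s)

/-- `v` changes sign at `z ∈ (0,∞)`: `v z = 0` and `v` takes both signs in every
neighborhood of `z` (within `(0,∞)`). -/
def SignChange (v : ℝ → ℝ) (z : ℝ) : Prop :=
  v z = 0 ∧ ∀ ε : ℝ, 0 < ε →
    (∃ x ∈ Ioo (z - ε) (z + ε) ∩ Ioi 0, 0 < v x) ∧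
    (∃ x ∈ Ioo (z - ε) (z + ε) ∩ Ioi 0, v x < 0)

/-- `v` has exactly `m` sign changes in `(0,∞)`. -/
def ExactSignChanges (v : ℝ → ℝ) (m : ℕ) : Prop :=
  {z | 0 < z ∧ SignChange v z}.Finite ∧ {z | 0 < z ∧ SignChange v z}.ncard = m

/-- Bound state: a C² solution of (E) on `(0,∞)` with `v' 0 = 0` and `v r → 0` as `r → ∞`. -/
def BoundState (n : ℕ) (f : ℝ → ℝ) (v : ℝ → ℝ) : Prop :=
  ContinuousOn v (Ici 0) ∧
    (∀ r : ℝ, 0 < r → DifferentiableAt ℝ v r ∧ DifferentiableAt ℝ (deriv v) r) ∧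
    (∀ r : ℝ, 0 < r → deriv (deriv v) r + ((n : ℝ) - 1) / r * deriv v r + f (v r) = 0) ∧
    deriv v 0 = 0 ∧ Tendsto v atTop (nhds 0)

/-- Solution of the Dirichlet problem on the ball of radius `R`. -/
def DirichletSol (n : ℕ) (f : ℝ → ℝ) (R : ℝ) (v : ℝ → ℝ) : Prop :=
  ContinuousOn v (Icc 0 R) ∧
    (∀ r ∈ Ioo (0:ℝ) R, DifferentiableAt ℝ v r ∧ DifferentiableAt ℝ (deriv v) r) ∧
    (∀ r ∈ Ioo (0:ℝ) R, deriv (deriv v) r + ((n : ℝ) - 1) / r * deriv v r + f (v r) = 0) ∧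
    deriv v 0 = 0 ∧ v R = 0

end
end Paper

open Paper Set Filter MeasureTheory

/-!
On a decreasing stretch of a solution `v`, the energy `v'² / 2 + F(v)` strictly decreases. For a
solution with initial value in `G_k` it tends to zero at the end of the last stretch, so `F > 0` and
hence `|v| > β` at all extremal points. These are therefore nondegenerate, and persist for nearby
initial values.

For the intersections, regard two neighbouring solutions `A`, `B` on such a stretch as functions of
the level `s = v`, and set `w = r_A - r_B` and `q = |v_A'| - |v_B'|`. Then
`w' = q / (|v_A'| |v_B'|)` and `q' = -ν w / (r_A r_B) + f q / (|v_A'| |v_B'|)`, with `ν = n - 1`.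
Suppose `w > 0` throughout. Near the top of the stretch the slopes almost vanish, so that a very
negative `q` would have made `w` negative there: hence `q ≥ -ε w` on leaving the top. The friction
term then lifts `q` to `q ≥ ε w` across the core. Near the bottom the slopes almost vanish again,
and such a `q` drives `w` below zero, a contradiction.
-/

open scoped Topology

section Calculus

variable {h h' : ℝ → ℝ}

lemma antitoneOn_of_hasDerivAt_nonpos {s : Set ℝ} [hs : s.OrdConnected]
    (hd : ∀ x ∈ s, HasDerivAt h (h' x) x) (hn : ∀ x ∈ s, h' x ≤ 0) : AntitoneOn h s :=
  antitoneOn_of_hasDerivWithinAt_nonpos hs.convex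
    (fun x hx => (hd x hx).continuousAt.continuousWithinAt)
    (fun x hx => (hd x (interior_subset hx)).hasDerivWithinAt)
    (fun x hx => hn x (interior_subset hx))

lemma strictAntiOn_of_hasDerivAt_neg {s : Set ℝ} [hs : s.OrdConnected]
    (hd : ∀ x ∈ s, HasDerivAt h (h' x) x) (hn : ∀ x ∈ s, h' x < 0) : StrictAntiOn h s :=
  strictAntiOn_of_hasDerivWithinAt_neg hs.convex
    (fun x hx => (hd x hx).continuousAt.continuousWithinAt)
    (fun x hx => (hd x (interior_subset hx)).hasDerivWithinAt)
    (fun x hx => hn x (interior_subset hx))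

lemma nonneg_of_deriv_neg_of_eq_zero {a b : ℝ} (hd : ∀ x ∈ Icc a b, HasDerivAt h (h' x) x)
    (hb : 0 ≤ h b) (hz : ∀ x ∈ Icc a b, h x = 0 → h' x < 0) : ∀ x ∈ Icc a b, 0 ≤ h x := by
  have hneg : ∀ y ∈ Icc (-b) (-a), HasDerivAt (fun y => -h (-y)) (h' (-y)) y := by
    intro y hy
    have hcomp := (hd (-y) ⟨by linarith [hy.2], by linarith [hy.1]⟩).comp y (hasDerivAt_neg y)
    exact hcomp.neg.congr_deriv (by ring)
  have hle := image_le_of_deriv_right_lt_deriv_boundary (f := fun y => -h (-y))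
    (f' := fun y => h' (-y)) (a := -b) (b := -a) (B := fun _ => 0) (B' := fun _ => 0)
    (fun y hy => (hneg y hy).continuousAt.continuousWithinAt)
    (fun y hy => (hneg y ⟨hy.1, hy.2.le⟩).hasDerivWithinAt)
    (by simpa using hb) (fun y => hasDerivAt_const y 0)
    (fun y hy h0 => hz (-y) ⟨by linarith [hy.2], by linarith [hy.1]⟩ (by linarith))
  intro x hx
  have hx' := hle (x := -x) ⟨by linarith [hx.2], by linarith [hx.1]⟩
  simp only [neg_neg] at hx'
  linarith

end Calculus

/-! ### Decreasing branches as functions of the level -/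

/-- The equation `v'' + (ν / r) v' + f v = 0` along a decreasing branch of `v`, rewritten for the
inverse function `ρ` of the branch and for `p = |v' ∘ ρ|`, both functions of the level `s = v r`,
which ranges over `J`. -/
structure LevelSystem (ν : ℝ) (f ρ p : ℝ → ℝ) (J : Set ℝ) : Prop where
  hasDerivAt_radius : ∀ s ∈ J, HasDerivAt ρ (-(p s)⁻¹) s
  hasDerivAt_slope : ∀ s ∈ J, HasDerivAt p (ν / ρ s - f s / p s) s
  radius_pos : ∀ s ∈ J, 0 < ρ s
  slope_pos : ∀ s ∈ J, 0 < p s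

namespace LevelSystem

section Basic

variable {ν : ℝ} {f ρ p : ℝ → ℝ} {J : Set ℝ}

lemma mono {J' : Set ℝ} (h : LevelSystem ν f ρ p J) (hJ : J' ⊆ J) : LevelSystem ν f ρ p J' where
  hasDerivAt_radius s hs := h.hasDerivAt_radius s (hJ hs)
  hasDerivAt_slope s hs := h.hasDerivAt_slope s (hJ hs)
  radius_pos s hs := h.radius_pos s (hJ hs)
  slope_pos s hs := h.slope_pos s (hJ hs)

lemma continuousOn_radius (h : LevelSystem ν f ρ p J) : ContinuousOn ρ J :=
  fun s hs => (h.hasDerivAt_radius s hs).continuousAt.continuousWithinAt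

lemma continuousOn_slope (h : LevelSystem ν f ρ p J) : ContinuousOn p J :=
  fun s hs => (h.hasDerivAt_slope s hs).continuousAt.continuousWithinAt

lemma antitoneOn_radius [J.OrdConnected] (h : LevelSystem ν f ρ p J) : AntitoneOn ρ J :=
  antitoneOn_of_hasDerivAt_nonpos h.hasDerivAt_radius
    fun s hs => neg_nonpos.2 (inv_nonneg.2 (h.slope_pos s hs).le)

end Basic

section Comparison

variable {ν : ℝ} {f rA pA rB pB : ℝ → ℝ} {J : Set ℝ}

lemma hasDerivAt_gap (hA : LevelSystem ν f rA pA J) (hB : LevelSystem ν f rB pB J) {s : ℝ}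
    (hs : s ∈ J) :
    HasDerivAt (fun s => rA s - rB s) ((pA s - pB s) / (pA s * pB s)) s := by
  have := (hA.slope_pos s hs).ne'
  have := (hB.slope_pos s hs).ne'
  refine ((hA.hasDerivAt_radius s hs).sub (hB.hasDerivAt_radius s hs)).congr_deriv ?_
  field_simp
  ring

lemma hasDerivAt_slope_gap (hA : LevelSystem ν f rA pA J) (hB : LevelSystem ν f rB pB J) {s : ℝ}
    (hs : s ∈ J) :
    HasDerivAt (fun s => pA s - pB s)
      (-(ν / (rA s * rB s) * (rA s - rB s)) + f s * (pA s - pB s) / (pA s * pB s)) s := by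
  have := (hA.slope_pos s hs).ne'
  have := (hB.slope_pos s hs).ne'
  have := (hA.radius_pos s hs).ne'
  have := (hB.radius_pos s hs).ne'
  refine ((hA.hasDerivAt_slope s hs).sub (hB.hasDerivAt_slope s hs)).congr_deriv ?_
  field_simp
  ring

lemma friction_pos (hν : 0 < ν) (hA : LevelSystem ν f rA pA J) (hB : LevelSystem ν f rB pB J)
    (hw : ∀ s ∈ J, rB s < rA s) {s : ℝ} (hs : s ∈ J) :
    0 < ν / (rA s * rB s) * (rA s - rB s) :=
  mul_pos (div_pos hν (mul_pos (hA.radius_pos s hs) (hB.radius_pos s hs))) (sub_pos.2 (hw s hs))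

lemma antitoneOn_slope_gap [J.OrdConnected] (hν : 0 < ν) (hA : LevelSystem ν f rA pA J)
    (hB : LevelSystem ν f rB pB J) (hw : ∀ s ∈ J, rB s < rA s)
    (hf : ∀ s ∈ J, f s * (pA s - pB s) ≤ 0) : AntitoneOn (fun s => pA s - pB s) J :=
  antitoneOn_of_hasDerivAt_nonpos (fun _ hs => hA.hasDerivAt_slope_gap hB hs) fun s hs =>
    add_nonpos (neg_nonpos.2 (friction_pos hν hA hB hw hs).le)
      (div_nonpos_of_nonpos_of_nonneg (hf s hs)
        (mul_pos (hA.slope_pos s hs) (hB.slope_pos s hs)).le)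

variable {a b : ℝ}

lemma slope_gap_nonneg (hν : 0 < ν) (hA : LevelSystem ν f rA pA (Icc a b))
    (hB : LevelSystem ν f rB pB (Icc a b)) (hw : ∀ s ∈ Icc a b, rB s < rA s)
    (hb : 0 ≤ pA b - pB b) : ∀ s ∈ Icc a b, 0 ≤ pA s - pB s := by
  refine nonneg_of_deriv_neg_of_eq_zero (fun s hs => hA.hasDerivAt_slope_gap hB hs) hb ?_
  intro s hs h0
  simpa [h0] using friction_pos hν hA hB hw hs

-- The gap `w = r_A - r_B` has `w' ≤ -κ / p_B² ≤ (κ / C) (log p_B)'`.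
lemma mul_log_le_gap_of_slope_gap_le (hν : 0 < ν) (hab : a ≤ b)
    (hA : LevelSystem ν f rA pA (Icc a b)) (hB : LevelSystem ν f rB pB (Icc a b)) {κ C : ℝ}
    (hκ : 0 ≤ κ) (hC : 0 < C) (hfC : ∀ s ∈ Icc a b, f s ≤ C)
    (hq : ∀ s ∈ Icc a b, pA s - pB s ≤ -κ) :
    κ / C * (Real.log (pB a) - Real.log (pB b)) ≤ (rA a - rB a) - (rA b - rB b) := by
  have hanti := antitoneOn_of_hasDerivAt_nonpos (s := Icc a b)
    (h := fun s => (rA s - rB s) - κ / C * Real.log (pB s))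
    (fun s hs => (hA.hasDerivAt_gap hB hs).sub
      (((hB.hasDerivAt_slope s hs).log (hB.slope_pos s hs).ne').const_mul (κ / C))) ?_
  · linarith [hanti (left_mem_Icc.2 hab) (right_mem_Icc.2 hab) hab]
  intro s hs
  have hpA := hA.slope_pos s hs
  have hpB := hB.slope_pos s hs
  have hrB := hB.radius_pos s hs
  have hgap : (pA s - pB s) / (pA s * pB s) ≤ -(κ / (pB s * pB s)) := by
    rw [← neg_div, div_le_div_iff₀ (by positivity) (by positivity)]
    nlinarith [mul_nonneg (sub_nonneg.2 (hq s hs)) (mul_pos hpB hpB).le,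
      mul_nonneg (mul_nonneg hκ hpB.le) (by linarith [hq s hs] : 0 ≤ pB s - pA s)]
  have hlog : -(κ / (pB s * pB s)) ≤ κ / C * ((ν / rB s - f s / pB s) / pB s) := by
    have hforce : f s / (pB s * pB s) ≤ C / (pB s * pB s) := by gcongr; exact hfC s hs
    calc -(κ / (pB s * pB s)) = κ / C * -(C / (pB s * pB s)) := by field_simp
      _ ≤ κ / C * (ν / rB s / pB s - f s / (pB s * pB s)) := by
          have : 0 ≤ ν / rB s / pB s := by positivity
          gcongr
          linarith
      _ = _ := by field_simp
  linarith

lemma mul_log_le_gap_of_le_slope_gap (hab : a ≤ b)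
    (hA : LevelSystem ν f rA pA (Icc a b)) (hB : LevelSystem ν f rB pB (Icc a b)) {κ C : ℝ}
    (hκ : 0 ≤ κ) (hC : 0 < C) (hfC : ∀ s ∈ Icc a b, ν * pA s / rA s - f s ≤ C)
    (hq : ∀ s ∈ Icc a b, κ ≤ pA s - pB s) :
    κ / C * (Real.log (pA b) - Real.log (pA a)) ≤ (rA b - rB b) - (rA a - rB a) := by
  have hanti := antitoneOn_of_hasDerivAt_nonpos (s := Icc a b)
    (h := fun s => κ / C * Real.log (pA s) - (rA s - rB s))
    (fun s hs => (((hA.hasDerivAt_slope s hs).log (hA.slope_pos s hs).ne').const_mul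
      (κ / C)).sub (hA.hasDerivAt_gap hB hs)) ?_
  · linarith [hanti (left_mem_Icc.2 hab) (right_mem_Icc.2 hab) hab]
  intro s hs
  have hpA := hA.slope_pos s hs
  have hpB := hB.slope_pos s hs
  have hgap : κ / (pA s * pA s) ≤ (pA s - pB s) / (pA s * pB s) := by
    rw [div_le_div_iff₀ (by positivity) (by positivity)]
    nlinarith [mul_nonneg (sub_nonneg.2 (hq s hs)) (mul_pos hpA hpA).le,
      mul_nonneg (mul_nonneg hκ hpA.le) (hκ.trans (hq s hs))]
  have hlog : κ / C * ((ν / rA s - f s / pA s) / pA s) ≤ κ / (pA s * pA s) := by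
    have hrA := hA.radius_pos s hs
    calc κ / C * ((ν / rA s - f s / pA s) / pA s)
        = κ / C / (pA s * pA s) * (ν * pA s / rA s - f s) := by field_simp
      _ ≤ κ / C / (pA s * pA s) * C := by gcongr; exact hfC s hs
      _ = _ := by field_simp
  linarith

lemma neg_mul_gap_le_slope_gap_of_force_nonneg (hν : 0 < ν) (hab : a ≤ b)
    (hA : LevelSystem ν f rA pA (Icc a b)) (hB : LevelSystem ν f rB pB (Icc a b))
    (hw : ∀ s ∈ Icc a b, rB s < rA s) {C ε : ℝ} (hC : 0 < C) (hε : 0 < ε)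
    (hf0 : ∀ s ∈ Icc a b, 0 ≤ f s) (hfC : ∀ s ∈ Icc a b, f s ≤ C)
    (hlog : C / ε ≤ Real.log (pB a) - Real.log (pB b)) :
    -(ε * (rA a - rB a)) ≤ pA a - pB a := by
  by_contra! hlt
  have ha : a ∈ Icc a b := left_mem_Icc.2 hab
  have hb : b ∈ Icc a b := right_mem_Icc.2 hab
  have hκ : 0 < -(pA a - pB a) := by linarith [mul_pos hε (sub_pos.2 (hw a ha))]
  have hneg : ∀ s ∈ Icc a b, pA s - pB s ≤ 0 := by
    intro s hs
    by_contra! hpos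
    have hsub : Icc a s ⊆ Icc a b := Icc_subset_Icc_right hs.2
    linarith [slope_gap_nonneg hν (hA.mono hsub) (hB.mono hsub) (fun t ht => hw t (hsub ht))
      hpos.le a (left_mem_Icc.2 hs.1)]
  have hanti := antitoneOn_slope_gap hν hA hB hw
    fun s hs => mul_nonpos_of_nonneg_of_nonpos (hf0 s hs) (hneg s hs)
  have hgrowth := mul_log_le_gap_of_slope_gap_le hν hab hA hB hκ.le hC hfC
    fun s hs => by simpa only [neg_neg] using hanti ha hs hs.1
  have hlower : -(pA a - pB a) / ε ≤ -(pA a - pB a) / C * (Real.log (pB a) - Real.log (pB b)) :=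
    calc -(pA a - pB a) / ε = -(pA a - pB a) / C * (C / ε) := by field_simp
      _ ≤ _ := by gcongr
  have hupper : rA a - rB a < -(pA a - pB a) / ε := by
    rw [lt_div_iff₀ hε]
    linarith
  linarith [hw b hb]

lemma mul_gap_le_slope_gap_of_friction (hab : a < b)
    (hA : LevelSystem ν f rA pA (Icc a b)) (hB : LevelSystem ν f rB pB (Icc a b))
    (hw : ∀ s ∈ Icc a b, rB s < rA s) {c C ε : ℝ} (hε : 0 < ε)
    (hc : ∀ s ∈ Icc a b, c ≤ ν / (rA s * rB s))
    (hC : ∀ s ∈ Icc a b, |f s| / (pA s * pB s) ≤ C) (hεc : 4 * ε ≤ c * (b - a))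
    (hεC : 4 * (C * ε) ≤ c) (hb : -(ε * (rA b - rB b)) ≤ pA b - pB b) :
    ε * (rA a - rB a) ≤ pA a - pB a := by
  have hba : 0 < b - a := sub_pos.2 hab
  -- The barrier `ε - l (s - a)` runs linearly from `-ε` at `b` to `ε` at `a`.
  set l := 2 * ε / (b - a) with hl
  have hlba : l * (b - a) = 2 * ε := div_mul_cancel₀ _ hba.ne'
  have hl0 : 0 < l := by positivity
  have hlc : 2 * l ≤ c := by
    rw [hl, ← mul_div_assoc, div_le_iff₀ hba]
    linarith
  have hbarrier := nonneg_of_deriv_neg_of_eq_zero (a := a) (b := b)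
    (h := fun s => (pA s - pB s) - (ε - l * (s - a)) * (rA s - rB s))
    (fun s hs => (hA.hasDerivAt_slope_gap hB hs).sub
      (((((hasDerivAt_id s).sub_const a).const_mul l).const_sub ε).mul (hA.hasDerivAt_gap hB hs)))
    (by rw [hlba]; linarith) ?_ a (left_mem_Icc.2 hab.le)
  · simp only [sub_self, mul_zero, sub_zero] at hbarrier
    linarith
  intro s hs h0
  simp only [id] at h0 ⊢
  set g := ε - l * (s - a)
  have hP := mul_pos (hA.slope_pos s hs) (hB.slope_pos s hs)
  have hgε : |g| ≤ ε := abs_le.2 ⟨by nlinarith [hs.2], by nlinarith [hs.1]⟩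
  have hforce : f s / (pA s * pB s) * g ≤ C * ε := by
    refine (le_abs_self _).trans ?_
    rw [abs_mul, abs_div, abs_of_pos hP]
    exact mul_le_mul (hC s hs) hgε (abs_nonneg _) ((by positivity : (0 : ℝ) ≤ _).trans (hC s hs))
  have hsq : 0 ≤ g ^ 2 / (pA s * pB s) := by positivity
  have hcoef : -(ν / (rA s * rB s)) + f s / (pA s * pB s) * g + l - g ^ 2 / (pA s * pB s) < 0 := by
    linarith [hc s hs]
  rw [sub_eq_zero.1 h0]
  refine lt_of_eq_of_lt ?_ (mul_neg_of_neg_of_pos hcoef (sub_pos.2 (hw s hs)))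
  ring

lemma slope_gap_lt_mul_gap_of_force_nonpos (hν : 0 < ν) (hab : a ≤ b)
    (hA : LevelSystem ν f rA pA (Icc a b)) (hB : LevelSystem ν f rB pB (Icc a b))
    (hw : ∀ s ∈ Icc a b, rB s < rA s) {C ε : ℝ} (hC : 0 < C) (hε : 0 < ε)
    (hf0 : ∀ s ∈ Icc a b, f s ≤ 0) (hfC : ∀ s ∈ Icc a b, ν * pA s / rA s - f s ≤ C)
    (hlog : C / ε ≤ Real.log (pA b) - Real.log (pA a)) :
    pA b - pB b < ε * (rA b - rB b) := by
  by_contra! hle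
  have ha : a ∈ Icc a b := left_mem_Icc.2 hab
  have hb : b ∈ Icc a b := right_mem_Icc.2 hab
  have hκ : 0 < pA b - pB b := (mul_pos hε (sub_pos.2 (hw b hb))).trans_le hle
  have hnonneg := slope_gap_nonneg hν hA hB hw hκ.le
  have hanti := antitoneOn_slope_gap hν hA hB hw
    fun s hs => mul_nonpos_of_nonpos_of_nonneg (hf0 s hs) (hnonneg s hs)
  have hgrowth := mul_log_le_gap_of_le_slope_gap hab hA hB hκ.le hC hfC
    fun s hs => hanti hs hb hs.2
  have hlower : (pA b - pB b) / ε ≤ (pA b - pB b) / C * (Real.log (pA b) - Real.log (pA a)) :=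
    calc (pA b - pB b) / ε = (pA b - pB b) / C * (C / ε) := by field_simp
      _ ≤ _ := by gcongr
  have hupper : rA b - rB b ≤ (pA b - pB b) / ε := by
    rw [le_div_iff₀ hε]
    linarith
  linarith [hw a ha]

end Comparison

end LevelSystem

/-- Control of a level system by constants, for levels `a ≤ a' < b' ≤ b`: the slope is at least `d`
on the core `[a', b']` and at most `e` at both ends. -/
structure BranchBounds (ν : ℝ) (f ρ p : ℝ → ℝ) (a a' b' b m R d e : ℝ) : Prop where
  levelSystem : LevelSystem ν f ρ p (Icc a b)
  le_radius : m ≤ ρ a'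
  radius_le : ρ a' ≤ R
  le_slope : ∀ s ∈ Icc a' b', d ≤ p s
  slope_le_one : ∀ s ∈ Icc a a', p s ≤ 1
  slope_left_le : p a ≤ e
  slope_right_le : p b ≤ e

namespace BranchBounds

variable {ν : ℝ} {f rA pA rB pB : ℝ → ℝ} {a a' b' b m R d e C ε : ℝ}

lemma log_sub_log_le {x y : ℝ} (hd : 0 < d) (hx : d ≤ x) (hy : 0 < y) (hye : y ≤ e) :
    Real.log d - Real.log e ≤ Real.log x - Real.log y :=
  sub_le_sub (Real.log_le_log hd hx) (Real.log_le_log hy hye)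

lemma friction_ge (hν : 0 < ν) (haa' : a ≤ a') (hb'b : b' ≤ b)
    (hA : BranchBounds ν f rA pA a a' b' b m R d e)
    (hB : BranchBounds ν f rB pB a a' b' b m R d e) :
    ∀ s ∈ Icc a' b', ν / (R * R) ≤ ν / (rA s * rB s) := by
  intro s hs
  have hsI : s ∈ Icc a b := ⟨haa'.trans hs.1, hs.2.trans hb'b⟩
  have ha'I : a' ∈ Icc a b := ⟨haa', hs.1.trans hsI.2⟩
  have hrA := hA.levelSystem.radius_pos s hsI
  have hrB := hB.levelSystem.radius_pos s hsI
  have hAR := (hA.levelSystem.antitoneOn_radius ha'I hsI hs.1).trans hA.radius_le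
  have hBR := (hB.levelSystem.antitoneOn_radius ha'I hsI hs.1).trans hB.radius_le
  exact div_le_div_of_nonneg_left hν.le (mul_pos hrA hrB)
    (mul_le_mul hAR hBR hrB.le (hrA.le.trans hAR))

lemma force_div_slopes_le (hC : ∀ s ∈ Icc a b, |f s| ≤ C) (hd : 0 < d) (haa' : a ≤ a')
    (hb'b : b' ≤ b) (hA : BranchBounds ν f rA pA a a' b' b m R d e)
    (hB : BranchBounds ν f rB pB a a' b' b m R d e) :
    ∀ s ∈ Icc a' b', |f s| / (pA s * pB s) ≤ C / (d * d) := by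
  intro s hs
  have hfC := hC s ⟨haa'.trans hs.1, hs.2.trans hb'b⟩
  exact div_le_div₀ ((abs_nonneg _).trans hfC) hfC (mul_pos hd hd)
    (mul_le_mul (hA.le_slope s hs) (hB.le_slope s hs) hd.le (hd.le.trans (hA.le_slope s hs)))

lemma friction_sub_force_le (hν : 0 < ν) (hC : ∀ s ∈ Icc a b, |f s| ≤ C) (hm : 0 < m)
    (ha'b : a' ≤ b) (hA : BranchBounds ν f rA pA a a' b' b m R d e) :
    ∀ s ∈ Icc a a', ν * pA s / rA s - f s ≤ ν / m + C := by
  intro s hs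
  have hsI : s ∈ Icc a b := ⟨hs.1, hs.2.trans ha'b⟩
  have hmr := hA.le_radius.trans
    (hA.levelSystem.antitoneOn_radius hsI ⟨hs.1.trans hs.2, ha'b⟩ hs.2)
  have hfriction : ν * pA s / rA s ≤ ν / m :=
    div_le_div₀ hν.le (mul_le_of_le_one_right hν.le (hA.slope_le_one s hs)) hm hmr
  linarith [neg_abs_le (f s), hC s hsI]

lemma not_separated (hν : 0 < ν) (haa' : a ≤ a') (ha'b' : a' < b') (hb'b : b' ≤ b) (hd : 0 < d)
    (hm : 0 < m) (hC : ∀ s ∈ Icc a b, |f s| ≤ C) (hε : 0 < ε)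
    (hε₁ : 4 * ε ≤ ν / (R * R) * (b' - a')) (hε₂ : 4 * (C / (d * d) * ε) ≤ ν / (R * R))
    (hε₃ : (ν / m + C) / ε ≤ Real.log d - Real.log e)
    (hf_top : ∀ s ∈ Icc b' b, 0 ≤ f s) (hf_bot : ∀ s ∈ Icc a a', f s ≤ 0)
    (hA : BranchBounds ν f rA pA a a' b' b m R d e)
    (hB : BranchBounds ν f rB pB a a' b' b m R d e) :
    ¬ ∀ s ∈ Icc a b, rB s < rA s := by
  intro hw
  have ha'b : a' ≤ b := ha'b'.le.trans hb'b
  have hab' : a ≤ b' := haa'.trans ha'b'.le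
  have hab : a ≤ b := haa'.trans ha'b
  have hC0 : 0 ≤ C := (abs_nonneg _).trans (hC a (left_mem_Icc.2 hab))
  have hC' : 0 < ν / m + C := by positivity
  have htop : Icc b' b ⊆ Icc a b := Icc_subset_Icc_left hab'
  have hcore : Icc a' b' ⊆ Icc a b := Icc_subset_Icc haa' hb'b
  have hbot : Icc a a' ⊆ Icc a b := Icc_subset_Icc_right ha'b
  have hq_top := LevelSystem.neg_mul_gap_le_slope_gap_of_force_nonneg hν hb'b
    (hA.levelSystem.mono htop) (hB.levelSystem.mono htop) (fun s hs => hw s (htop hs)) hC' hε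
    hf_top (fun s hs => (le_abs_self _).trans
      ((hC s (htop hs)).trans (le_add_of_nonneg_left (by positivity))))
    (hε₃.trans (log_sub_log_le hd (hB.le_slope b' (right_mem_Icc.2 ha'b'.le))
      (hB.levelSystem.slope_pos b (right_mem_Icc.2 hab)) hB.slope_right_le))
  have hq_core := LevelSystem.mul_gap_le_slope_gap_of_friction ha'b' (hA.levelSystem.mono hcore)
    (hB.levelSystem.mono hcore) (fun s hs => hw s (hcore hs)) hε (friction_ge hν haa' hb'b hA hB)
    (force_div_slopes_le hC hd haa' hb'b hA hB) hε₁ hε₂ hq_top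
  have hq_bot := LevelSystem.slope_gap_lt_mul_gap_of_force_nonpos hν haa' (hA.levelSystem.mono hbot)
    (hB.levelSystem.mono hbot) (fun s hs => hw s (hbot hs)) hC' hε hf_bot
    (friction_sub_force_le hν hC hm ha'b hA)
    (hε₃.trans (log_sub_log_le hd (hA.le_slope a' (left_mem_Icc.2 ha'b'.le))
      (hA.levelSystem.slope_pos a (left_mem_Icc.2 hab)) hA.slope_left_le))
  exact hq_core.not_gt hq_bot

lemma exists_radius_eq (hν : 0 < ν) (haa' : a ≤ a') (ha'b' : a' < b') (hb'b : b' ≤ b)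
    (hd : 0 < d) (hm : 0 < m) (hC : ∀ s ∈ Icc a b, |f s| ≤ C) (hε : 0 < ε)
    (hε₁ : 4 * ε ≤ ν / (R * R) * (b' - a')) (hε₂ : 4 * (C / (d * d) * ε) ≤ ν / (R * R))
    (hε₃ : (ν / m + C) / ε ≤ Real.log d - Real.log e)
    (hf_top : ∀ s ∈ Icc b' b, 0 ≤ f s) (hf_bot : ∀ s ∈ Icc a a', f s ≤ 0)
    (hA : BranchBounds ν f rA pA a a' b' b m R d e)
    (hB : BranchBounds ν f rB pB a a' b' b m R d e) : ∃ s ∈ Icc a b, rA s = rB s := by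
  have hAB := not_separated hν haa' ha'b' hb'b hd hm hC hε hε₁ hε₂ hε₃ hf_top hf_bot hA hB
  have hBA := not_separated hν haa' ha'b' hb'b hd hm hC hε hε₁ hε₂ hε₃ hf_top hf_bot hB hA
  push Not at hAB hBA
  obtain ⟨s, hs, hsAB⟩ := hAB
  obtain ⟨t, ht, htBA⟩ := hBA
  exact isPreconnected_Icc.intermediate_value₂ hs ht hA.levelSystem.continuousOn_radius
    hB.levelSystem.continuousOn_radius hsAB htBA

end BranchBounds

section Perturbation

variable {ν : ℝ} {f ρ p : ℝ → ℝ}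

lemma BranchBounds.eventually_of_tendstoUniformlyOn {ι : Type*} {l : Filter ι} {r q : ι → ℝ → ℝ}
    {a a' b' b R m d e : ℝ} (haa' : a ≤ a') (ha'b' : a' ≤ b') (hb'b : b' ≤ b) (hd : 0 < d)
    (hm : m < ρ a') (hR : ρ a' < R) (hcore : ∀ s ∈ Icc a' b', 2 * d ≤ p s)
    (hbot : ∀ s ∈ Icc a a', p s ≤ 1 / 2) (ha : p a < e) (hb : p b < e)
    (hr : TendstoUniformlyOn r ρ l (Icc a b)) (hq : TendstoUniformlyOn q p l (Icc a b))
    (hsys : ∀ᶠ i in l, LevelSystem ν f (r i) (q i) (Icc a b)) :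
    ∀ᶠ i in l, BranchBounds ν f (r i) (q i) a a' b' b m R d e := by
  have hab : a ≤ b := haa'.trans (ha'b'.trans hb'b)
  have hra' := hr.tendsto_at (⟨haa', ha'b'.trans hb'b⟩ : a' ∈ Icc a b)
  filter_upwards [hsys, hra'.eventually_const_lt hm, hra'.eventually_lt_const hR,
    (hq.tendsto_at (left_mem_Icc.2 hab)).eventually_lt_const ha,
    (hq.tendsto_at (right_mem_Icc.2 hab)).eventually_lt_const hb,
    (hq.mono (Icc_subset_Icc_right (ha'b'.trans hb'b))).eventually_forall_lt one_half_lt_one hbot,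
    Metric.tendstoUniformlyOn_iff.1 (hq.mono (Icc_subset_Icc haa' hb'b)) d hd]
    with i hi hmi hRi hai hbi hboti hcorei
  refine ⟨hi, hmi.le, hRi.le, fun s hs => ?_, fun s hs => (hboti s hs).le, hai.le, hbi.le⟩
  linarith [hcore s hs, (abs_lt.1 (hcorei s hs)).2]

/-- A decreasing branch, in the level variable, whose slope vanishes at both ends of the range
`(σ, τ)` of levels, while the nonlinearity pushes towards the core of the range at both ends. -/
structure IsFullLevelBranch (ν : ℝ) (f ρ p : ℝ → ℝ) (σ τ : ℝ) : Prop where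
  lt : σ < τ
  levelSystem : LevelSystem ν f ρ p (Ioo σ τ)
  tendsto_slope_left : Tendsto p (𝓝[>] σ) (𝓝 0)
  tendsto_slope_right : Tendsto p (𝓝[<] τ) (𝓝 0)
  force_nonpos : ∀ᶠ s in 𝓝[>] σ, f s ≤ 0
  force_nonneg : ∀ᶠ s in 𝓝[<] τ, 0 ≤ f s

namespace IsFullLevelBranch

variable {σ τ : ℝ}

lemma exists_core (h : IsFullLevelBranch ν f ρ p σ τ) :
    ∃ a' b', σ < a' ∧ a' < b' ∧ b' < τ ∧ (∀ s ∈ Ioc σ a', p s ≤ 1 / 2 ∧ f s ≤ 0) ∧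
      (∀ s ∈ Ico b' τ, 0 ≤ f s) ∧ ∃ d > 0, ∀ s ∈ Icc a' b', 2 * d ≤ p s := by
  obtain ⟨c, hσc, hcτ⟩ := exists_between h.lt
  obtain ⟨a', hσa', ha'⟩ := mem_nhdsGT_iff_exists_Ioc_subset.1
    (((h.tendsto_slope_left.eventually_le_const one_half_pos).and h.force_nonpos).and
      (Ioo_mem_nhdsGT hσc))
  obtain ⟨b', hb'τ, hb'⟩ := mem_nhdsLT_iff_exists_Ico_subset.1
    (h.force_nonneg.and (Ioo_mem_nhdsLT hcτ))
  have ha'c : a' < c := (ha' ⟨hσa', le_rfl⟩).2.2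
  have hcb' : c < b' := (hb' ⟨le_rfl, hb'τ⟩).2.1
  have hcore : Icc a' b' ⊆ Ioo σ τ := Icc_subset_Ioo hσa' hb'τ
  obtain ⟨t, ht, hmin⟩ := isCompact_Icc.exists_isMinOn (nonempty_Icc.2 (ha'c.trans hcb').le)
    (h.levelSystem.continuousOn_slope.mono hcore)
  exact ⟨a', b', hσa', ha'c.trans hcb', hb'τ, fun s hs => (ha' hs).1, fun s hs => (hb' hs).1,
    p t / 2, half_pos (h.levelSystem.slope_pos t (hcore ht)),
    fun s hs => (mul_div_cancel₀ _ two_ne_zero).trans_le (hmin hs)⟩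

lemma exists_ends (h : IsFullLevelBranch ν f ρ p σ τ) {a' b' e : ℝ} (hσ : σ < a') (hτ : b' < τ)
    (he : 0 < e) : ∃ a ∈ Ioo σ a', ∃ b ∈ Ioo b' τ, p a < e ∧ p b < e := by
  obtain ⟨a, hae, ha⟩ :=
    ((h.tendsto_slope_left.eventually_lt_const he).and (Ioo_mem_nhdsGT hσ)).exists
  obtain ⟨b, hbe, hb⟩ :=
    ((h.tendsto_slope_right.eventually_lt_const he).and (Ioo_mem_nhdsLT hτ)).exists
  exact ⟨a, ha, b, hb, hae, hbe⟩

lemma exists_eventually_radius_eq (hν : 0 < ν) (hf : ContinuousOn f (Icc σ τ))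
    (h : IsFullLevelBranch ν f ρ p σ τ) :
    ∃ a ∈ Ioo σ τ, ∃ b ∈ Ioo σ τ, ∀ {ι : Type*} {l : Filter ι} {r q : ι → ℝ → ℝ},
      TendstoUniformlyOn r ρ l (Icc a b) → TendstoUniformlyOn q p l (Icc a b) →
      (∀ᶠ i in l, LevelSystem ν f (r i) (q i) (Icc a b)) →
      ∀ᶠ ij in l ×ˢ l, ∃ s ∈ Icc a b, r ij.1 s = r ij.2 s := by
  obtain ⟨C, hC⟩ := isCompact_Icc.exists_bound_of_continuousOn hf
  obtain ⟨a', b', hσa', ha'b', hb'τ, hbot, htop, d, hd, hcore⟩ := h.exists_core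
  have ha' : 0 < ρ a' := h.levelSystem.radius_pos a' ⟨hσa', ha'b'.trans hb'τ⟩
  set m := ρ a' / 2
  set R := ρ a' + 1
  set c := ν / (R * R)
  have hR : 0 < R := by positivity
  have hc : 0 < c := div_pos hν (mul_pos hR hR)
  obtain ⟨ε, hε, hε₁, hε₂⟩ : ∃ ε > 0, 4 * ε ≤ c * (b' - a') ∧ 4 * (C / (d * d) * ε) ≤ c := by
    have hsmall : ∀ᶠ ε in 𝓝 (0 : ℝ), 4 * ε < c * (b' - a') ∧ 4 * (C / (d * d) * ε) < c := by
      refine .and (Tendsto.eventually_lt_const (v := 0) (mul_pos hc (sub_pos.2 ha'b')) ?_)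
        (Tendsto.eventually_lt_const (v := 0) hc ?_) <;>
      exact Continuous.tendsto' (by fun_prop) _ _ (by ring)
    obtain ⟨ε, ⟨h₁, h₂⟩, hε⟩ := ((hsmall.filter_mono nhdsWithin_le_nhds).and
      (self_mem_nhdsWithin (s := Ioi (0 : ℝ)))).exists
    exact ⟨ε, hε, h₁.le, h₂.le⟩
  set e := d * Real.exp (-((ν / m + C) / ε)) with he
  have hde : (ν / m + C) / ε ≤ Real.log d - Real.log e := by
    rw [he, Real.log_mul hd.ne' (Real.exp_ne_zero _), Real.log_exp]
    linarith
  obtain ⟨a, ha, b, hb, hpa, hpb⟩ := h.exists_ends hσa' hb'τ (e := e) (by positivity)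
  refine ⟨a, ⟨ha.1, ha.2.trans (ha'b'.trans hb'τ)⟩, b, ⟨hσa'.trans (ha'b'.trans hb.1), hb.2⟩,
    fun hr hq hsys => ?_⟩
  have hbounds := BranchBounds.eventually_of_tendstoUniformlyOn ha.2.le ha'b'.le hb.1.le hd
    (half_lt_self ha') (lt_add_one _) hcore (fun s hs => (hbot s ⟨ha.1.trans_le hs.1, hs.2⟩).1)
    hpa hpb hr hq hsys
  filter_upwards [hbounds.prod_mk hbounds] with ij hij
  exact BranchBounds.exists_radius_eq hν ha.2.le ha'b' hb.1.le hd (half_pos ha')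
    (fun s hs => hC s ⟨ha.1.le.trans hs.1, hs.2.trans hb.2.le⟩) hε hε₁ hε₂ hde
    (fun s hs => htop s ⟨hs.1, hs.2.trans_lt hb.2⟩)
    (fun s hs => (hbot s ⟨ha.1.trans_le hs.1, hs.2⟩).2) hij.1 hij.2

end IsFullLevelBranch

end Perturbation

section InverseConvergence

variable {ι E G H : Type*} [UniformSpace E] [UniformSpace H] {l : Filter ι}
  {r : ι → G → E} {ρ : G → E} {K : Set E} {J : Set G}

lemma tendstoUniformlyOn_of_leftInvOn [UniformSpace G] {X : ι → E → G} {v : E → G}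
    (hX : TendstoUniformlyOn X v l K) (hρ : UniformContinuousOn ρ (v '' K))
    (hinv : LeftInvOn ρ v K) (hJ : J ⊆ v '' K) (hr : ∀ᶠ i in l, MapsTo (r i) J K)
    (hXr : ∀ᶠ i in l, RightInvOn (r i) (X i) J) : TendstoUniformlyOn r ρ l J := by
  intro V hV
  have hVρ := mem_inf_principal.1 (mem_map.1 (hρ (symm_le_uniformity hV)))
  filter_upwards [hX _ hVρ, hr, hXr] with i hXi hri hXri s hs
  have hclose := hXi (r i s) (hri hs)
  rw [hXri hs] at hclose
  have := hclose ⟨mem_image_of_mem v (hri hs), hJ hs⟩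
  rwa [mem_preimage, hinv (hri hs)] at this

lemma tendstoUniformlyOn_comp_of_uniformContinuousOn {X : ι → E → H} {v : E → H}
    (hX : TendstoUniformlyOn X v l K) (hv : UniformContinuousOn v K)
    (hrρ : TendstoUniformlyOn r ρ l J) (hr : ∀ᶠ i in l, MapsTo (r i) J K) (hρ : MapsTo ρ J K) :
    TendstoUniformlyOn (fun i s => X i (r i s)) (fun s => v (ρ s)) l J := by
  intro V hV
  obtain ⟨W, hW, hWV⟩ := comp_mem_uniformity_sets hV
  have hWv := mem_inf_principal.1 (mem_map.1 (hv hW))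
  filter_upwards [hX W hW, hrρ _ hWv, hr] with i hXi hrρi hri s hs
  exact hWV ⟨v (r i s), hrρi s hs ⟨hρ hs, hri hs⟩, hXi (r i s) (hri hs)⟩

end InverseConvergence

section Inverse

variable {v v' : ℝ → ℝ} {I : Set ℝ}

lemma image_mem_nhds_of_strictAntiOn [hIc : I.OrdConnected] (hI : IsOpen I) (hv : ContinuousOn v I)
    (hanti : StrictAntiOn v I) {r : ℝ} (hr : r ∈ I) : v '' I ∈ 𝓝 (v r) := by
  obtain ⟨x, y, hrxy, hxy⟩ := mem_nhds_iff_exists_Ioo_subset.1 (hI.mem_nhds hr)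
  obtain ⟨x', hx', hx'r⟩ := exists_between hrxy.1
  obtain ⟨y', hry', hy'⟩ := exists_between hrxy.2
  have hx'I : x' ∈ I := hxy ⟨hx', hx'r.trans hrxy.2⟩
  have hy'I : y' ∈ I := hxy ⟨hrxy.1.trans hry', hy'⟩
  exact mem_of_superset (Ioo_mem_nhds (hanti hr hy'I hry') (hanti hx'I hr hx'r))
    ((hIc.isPreconnected.image v hv).ordConnected.out (mem_image_of_mem v hy'I)
      (mem_image_of_mem v hx'I) |> Ioo_subset_Icc_self.trans)

lemma hasDerivAt_invFunOn [I.OrdConnected] (hI : IsOpen I)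
    (hd : ∀ r ∈ I, HasDerivAt v (v' r) r) (hneg : ∀ r ∈ I, v' r < 0) {r : ℝ} (hr : r ∈ I) :
    HasDerivAt (Function.invFunOn v I) (v' r)⁻¹ (v r) := by
  have hanti : StrictAntiOn v I := strictAntiOn_of_hasDerivAt_neg hd hneg
  have hinv : LeftInvOn (Function.invFunOn v I) v I := hanti.injOn.leftInvOn_invFunOn
  have himage := image_mem_nhds_of_strictAntiOn hI
    (fun r hr => (hd r hr).continuousAt.continuousWithinAt) hanti hr
  have hanti_inv : AntitoneOn (Function.invFunOn v I) (v '' I) := by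
    rintro _ ⟨x, hx, rfl⟩ _ ⟨y, hy, rfl⟩ hxy
    rw [hinv hx, hinv hy]
    exact (hanti.le_iff_ge hx hy).1 hxy
  have hcont : ContinuousAt (Function.invFunOn v I) (v r) := by
    refine continuousAt_of_monotoneOn_of_image_mem_nhds (β := ℝᵒᵈ) hanti_inv.dual_right himage ?_
    have : Function.invFunOn v I '' (v '' I) ∈ 𝓝 (Function.invFunOn v I (v r)) := by
      rw [hinv.image_image, hinv hr]
      exact hI.mem_nhds hr
    exact this
  refine HasDerivAt.of_local_left_inverse (f := v) hcont ?_ (hneg r hr).ne ?_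
  · rw [hinv hr]
    exact hd r hr
  · filter_upwards [himage] with s hs using Function.invFunOn_eq hs

end Inverse

lemma eventually_forall_lt_of_tendstoUniformlyOn {E ι : Type*} [TopologicalSpace E] {l : Filter ι}
    {g : E → ℝ} {G : ι → E → ℝ} {K : Set E} {c : ℝ} (hK : IsCompact K) (hg : ContinuousOn g K)
    (hlt : ∀ r ∈ K, g r < c) (hG : TendstoUniformlyOn G g l K) : ∀ᶠ i in l, ∀ r ∈ K, G i r < c := by
  rcases K.eq_empty_or_nonempty with rfl | hne
  · simp
  obtain ⟨t, ht, hmax⟩ := hK.exists_isMaxOn hne hg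
  exact hG.eventually_forall_lt (hlt t ht) fun r hr => hmax hr

/-! ### Solutions of the radial equation -/

/-- `v` solves the radial equation `v'' + (ν / r) v' + f v = 0` on `(0, ∞)`, with `v'` the
derivative of `v`. -/
structure IsRadial (ν : ℝ) (f v v' : ℝ → ℝ) : Prop where
  hasDerivAt : ∀ r, 0 < r → HasDerivAt v (v' r) r
  hasDerivAt_deriv : ∀ r, 0 < r → HasDerivAt v' (-(ν / r * v' r) - f (v r)) r

namespace IsRadial

variable {ν : ℝ} {f v v' : ℝ → ℝ}

lemma continuousOn (h : IsRadial ν f v v') : ContinuousOn v (Ioi 0) :=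
  fun r hr => (h.hasDerivAt r hr).continuousAt.continuousWithinAt

lemma continuousOn_deriv (h : IsRadial ν f v v') : ContinuousOn v' (Ioi 0) :=
  fun r hr => (h.hasDerivAt_deriv r hr).continuousAt.continuousWithinAt

lemma strictAntiOn (h : IsRadial ν f v v') {I : Set ℝ} [I.OrdConnected] (hpos : I ⊆ Ioi 0)
    (hneg : ∀ r ∈ I, v' r < 0) : StrictAntiOn v I :=
  strictAntiOn_of_hasDerivAt_neg (fun r hr => h.hasDerivAt r (hpos hr)) hneg

lemma levelSystem (h : IsRadial ν f v v') {I : Set ℝ} [I.OrdConnected] (hI : IsOpen I)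
    (hpos : I ⊆ Ioi 0) (hneg : ∀ r ∈ I, v' r < 0) :
    LevelSystem ν f (Function.invFunOn v I) (fun s => -v' (Function.invFunOn v I s)) (v '' I) := by
  set ρ := Function.invFunOn v I
  have hmem : ∀ s ∈ v '' I, ρ s ∈ I := fun s hs => Function.invFunOn_mem hs
  have hv : ∀ s ∈ v '' I, v (ρ s) = s := fun s hs => Function.invFunOn_eq hs
  have hρ : ∀ s ∈ v '' I, HasDerivAt ρ (v' (ρ s))⁻¹ s := fun s hs => by
    simpa only [hv s hs] using
      hasDerivAt_invFunOn hI (fun r hr => h.hasDerivAt r (hpos hr)) hneg (hmem s hs)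
  refine ⟨fun s hs => ?_, fun s hs => ?_, fun s hs => hpos (hmem s hs),
    fun s hs => neg_pos.2 (hneg _ (hmem s hs))⟩
  · simpa only [inv_neg, neg_neg] using hρ s hs
  · refine ((h.hasDerivAt_deriv _ (hpos (hmem s hs))).comp s (hρ s hs)).neg.congr_deriv ?_
    have := (hneg _ (hmem s hs)).ne
    have : 0 < ρ s := hpos (hmem s hs)
    rw [hv s hs]
    field_simp
    ring

section Perturbation

variable {x y : ℝ} {ι : Type*} {l : Filter ι} {X X' : ι → ℝ → ℝ}

lemma Icc_subset_image_Ioo (h : IsRadial ν f v v') (hx : 0 < x) (hxy : x ≤ y) {a b : ℝ}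
    (ha : v y < a) (hb : b < v x) : Icc a b ⊆ v '' Ioo x y :=
  (Icc_subset_Ioo ha hb).trans <| intermediate_value_Ioo' hxy <|
    h.continuousOn.mono fun _ hr => hx.trans_le hr.1

lemma eventually_levelSystem_invFunOn (hv : IsRadial ν f v v') (hx : 0 < x) (hxy : x ≤ y)
    (hneg : ∀ r ∈ Icc x y, v' r < 0) {a b : ℝ} (ha : v y < a) (hb : b < v x)
    (hrad : ∀ᶠ i in l, IsRadial ν f (X i) (X' i)) (hX : TendstoUniformlyOn X v l (Icc x y))
    (hX' : TendstoUniformlyOn X' v' l (Icc x y)) :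
    ∀ᶠ i in l, LevelSystem ν f (Function.invFunOn (X i) (Ioo x y))
        (fun s => -X' i (Function.invFunOn (X i) (Ioo x y) s)) (Icc a b) ∧
      MapsTo (Function.invFunOn (X i) (Ioo x y)) (Icc a b) (Icc x y) ∧
      RightInvOn (Function.invFunOn (X i) (Ioo x y)) (X i) (Icc a b) := by
  have hpos : Icc x y ⊆ Ioi 0 := fun r hr => hx.trans_le hr.1
  filter_upwards [hrad, (hX.tendsto_at (right_mem_Icc.2 hxy)).eventually_lt_const ha,
    (hX.tendsto_at (left_mem_Icc.2 hxy)).eventually_const_lt hb,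
    eventually_forall_lt_of_tendstoUniformlyOn isCompact_Icc (hv.continuousOn_deriv.mono hpos)
      hneg hX'] with i hi hai hbi hnegi
  have himage := hi.Icc_subset_image_Ioo hx hxy hai hbi
  exact ⟨(hi.levelSystem isOpen_Ioo (Ioo_subset_Icc_self.trans hpos)
    fun t ht => hnegi t (Ioo_subset_Icc_self ht)).mono himage,
    fun s hs => Ioo_subset_Icc_self (Function.invFunOn_mem (himage hs)),
    fun s hs => Function.invFunOn_eq (himage hs)⟩

lemma exists_levelSystem_tendstoUniformlyOn (hv : IsRadial ν f v v')
    {I : Set ℝ} [hIc : I.OrdConnected] (hI : IsOpen I) (hpos : I ⊆ Ioi 0)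
    (hneg : ∀ r ∈ I, v' r < 0) (hx : x ∈ I) (hy : y ∈ I) (hxy : x ≤ y) {a b : ℝ} (ha : v y < a)
    (hb : b < v x) (hrad : ∀ᶠ i in l, IsRadial ν f (X i) (X' i))
    (hX : TendstoUniformlyOn X v l (Icc x y)) (hX' : TendstoUniformlyOn X' v' l (Icc x y)) :
    ∃ r : ι → ℝ → ℝ, TendstoUniformlyOn r (Function.invFunOn v I) l (Icc a b) ∧
      TendstoUniformlyOn (fun i s => -X' i (r i s))
        (fun s => -v' (Function.invFunOn v I s)) l (Icc a b) ∧
      ∀ᶠ i in l, LevelSystem ν f (r i) (fun s => -X' i (r i s)) (Icc a b) ∧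
        MapsTo (r i) (Icc a b) (Icc x y) ∧ RightInvOn (r i) (X i) (Icc a b) := by
  have hK : Icc x y ⊆ I := hIc.out hx hy
  have hv' : ContinuousOn v' (Icc x y) := hv.continuousOn_deriv.mono (hK.trans hpos)
  have hinv : LeftInvOn (Function.invFunOn v I) v I :=
    (hv.strictAntiOn hpos hneg).injOn.leftInvOn_invFunOn
  have himage : Icc a b ⊆ v '' Icc x y := (hv.Icc_subset_image_Ioo (hpos hx) hxy ha hb).trans
    (image_mono Ioo_subset_Icc_self)
  have hρ : UniformContinuousOn (Function.invFunOn v I) (v '' Icc x y) :=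
    (isCompact_Icc.image_of_continuousOn
      (hv.continuousOn.mono (hK.trans hpos))).uniformContinuousOn_of_continuous
        ((hv.levelSystem hI hpos hneg).continuousOn_radius.mono (image_mono hK))
  have hρK : MapsTo (Function.invFunOn v I) (Icc a b) (Icc x y) := fun s hs => by
    obtain ⟨t, ht, rfl⟩ := himage hs
    rwa [hinv (hK ht)]
  set r : ι → ℝ → ℝ := fun i => Function.invFunOn (X i) (Ioo x y)
  have hr := hv.eventually_levelSystem_invFunOn (hpos hx) hxy (fun t ht => hneg t (hK ht)) ha hb
    hrad hX hX'
  have hmaps : ∀ᶠ i in l, MapsTo (r i) (Icc a b) (Icc x y) := hr.mono fun i hi => hi.2.1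
  have hrρ := tendstoUniformlyOn_of_leftInvOn hX hρ (hinv.mono hK) himage hmaps
    (hr.mono fun i hi => hi.2.2)
  refine ⟨r, hrρ, ?_, hr⟩
  exact (tendstoUniformlyOn_comp_of_uniformContinuousOn hX'
    (isCompact_Icc.uniformContinuousOn_of_continuous hv') hrρ hmaps hρK).fun_neg

end Perturbation

end IsRadial

/-- A branch of the solution `v` over the open interval `I`, along which `v` decreases from `τ`
to `σ`, with slope vanishing at both ends of `I`, while `f` is nonnegative just below `τ` and
nonpositive just above `σ`. The ends of `I` are described by the filters `atBot` and `atTop` of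
the ordered type `I`, so that they may be infinite. -/
structure IsFullBranch (ν : ℝ) (f v v' : ℝ → ℝ) (I : Set ℝ) (σ τ : ℝ) : Prop where
  radial : IsRadial ν f v v'
  isOpen : IsOpen I
  ordConnected : I.OrdConnected
  nonempty : I.Nonempty
  pos : I ⊆ Ioi 0
  deriv_neg : ∀ r ∈ I, v' r < 0
  tendsto_left : Tendsto (fun r : I => v r) atBot (𝓝 τ)
  tendsto_deriv_left : Tendsto (fun r : I => v' r) atBot (𝓝 0)
  tendsto_right : Tendsto (fun r : I => v r) atTop (𝓝 σ)
  tendsto_deriv_right : Tendsto (fun r : I => v' r) atTop (𝓝 0)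
  force_nonneg : ∀ᶠ s in 𝓝[<] τ, 0 ≤ f s
  force_nonpos : ∀ᶠ s in 𝓝[>] σ, f s ≤ 0

namespace IsFullBranch

variable {ν : ℝ} {f v v' : ℝ → ℝ} {I : Set ℝ} {σ τ : ℝ}

lemma strictAntiOn (h : IsFullBranch ν f v v' I σ τ) : StrictAntiOn v I :=
  have := h.ordConnected
  h.radial.strictAntiOn h.pos h.deriv_neg

lemma lt_right (h : IsFullBranch ν f v v' I σ τ) {r : ℝ} (hr : r ∈ I) : σ < v r := by
  obtain ⟨y, hry, hy⟩ := mem_nhdsGT_iff_exists_Ioc_subset.1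
    (mem_nhdsWithin_of_mem_nhds (h.isOpen.mem_nhds hr))
  have hyI : y ∈ I := hy ⟨hry, le_rfl⟩
  have hanti : Antitone fun r : I => v r := fun x y hxy => h.strictAntiOn.antitoneOn x.2 y.2 hxy
  exact (hanti.le_of_tendsto h.tendsto_right ⟨y, hyI⟩).trans_lt (h.strictAntiOn hr hyI hry)

lemma lt_left (h : IsFullBranch ν f v v' I σ τ) {r : ℝ} (hr : r ∈ I) : v r < τ := by
  obtain ⟨x, hxr, hx⟩ := mem_nhdsLT_iff_exists_Ico_subset.1
    (mem_nhdsWithin_of_mem_nhds (h.isOpen.mem_nhds hr))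
  have hxI : x ∈ I := hx ⟨le_rfl, hxr⟩
  have hanti : Antitone fun r : I => v r := fun x y hxy => h.strictAntiOn.antitoneOn x.2 y.2 hxy
  exact (h.strictAntiOn hxI hr hxr).trans_le (hanti.ge_of_tendsto h.tendsto_left ⟨x, hxI⟩)

lemma exists_mem_gt (h : IsFullBranch ν f v v' I σ τ) {s : ℝ} (hs : s < τ) : ∃ r ∈ I, s < v r := by
  have := h.nonempty.to_subtype
  obtain ⟨r, hr⟩ := (h.tendsto_left.eventually_const_lt hs).exists
  exact ⟨r, r.2, hr⟩

lemma exists_mem_lt (h : IsFullBranch ν f v v' I σ τ) {s : ℝ} (hs : σ < s) : ∃ r ∈ I, v r < s := by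
  have := h.nonempty.to_subtype
  obtain ⟨r, hr⟩ := (h.tendsto_right.eventually_lt_const hs).exists
  exact ⟨r, r.2, hr⟩

lemma image_eq (h : IsFullBranch ν f v v' I σ τ) : v '' I = Ioo σ τ := by
  refine Subset.antisymm (image_subset_iff.2 fun r hr => ⟨h.lt_right hr, h.lt_left hr⟩) ?_
  intro s hs
  obtain ⟨x, hx, hsx⟩ := h.exists_mem_gt hs.2
  obtain ⟨y, hy, hys⟩ := h.exists_mem_lt hs.1
  exact (h.ordConnected.isPreconnected.image v
    (h.radial.continuousOn.mono h.pos)).ordConnected.out (mem_image_of_mem v hy)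
      (mem_image_of_mem v hx) ⟨hys.le, hsx.le⟩

lemma invFunOn_mem (h : IsFullBranch ν f v v' I σ τ) {s : ℝ} (hs : s ∈ Ioo σ τ) :
    Function.invFunOn v I s ∈ I := Function.invFunOn_mem (h.image_eq.ge hs)

lemma invFunOn_eq (h : IsFullBranch ν f v v' I σ τ) {s : ℝ} (hs : s ∈ Ioo σ τ) :
    v (Function.invFunOn v I s) = s := Function.invFunOn_eq (h.image_eq.ge hs)

lemma tendsto_deriv_invFunOn_left (h : IsFullBranch ν f v v' I σ τ) :
    Tendsto (fun s => v' (Function.invFunOn v I s)) (𝓝[<] τ) (𝓝 0) := by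
  have := h.nonempty.to_subtype
  intro V hV
  obtain ⟨y, hy⟩ := eventually_atBot.1 (h.tendsto_deriv_left hV)
  rw [mem_map]
  filter_upwards [Ioo_mem_nhdsLT (h.lt_left y.2)] with s hs
  have hs' : s ∈ Ioo σ τ := ⟨(h.lt_right y.2).trans hs.1, hs.2⟩
  refine hy ⟨_, h.invFunOn_mem hs'⟩ ((h.strictAntiOn.le_iff_ge y.2 (h.invFunOn_mem hs')).1 ?_)
  rw [h.invFunOn_eq hs']
  exact hs.1.le

lemma tendsto_deriv_invFunOn_right (h : IsFullBranch ν f v v' I σ τ) :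
    Tendsto (fun s => v' (Function.invFunOn v I s)) (𝓝[>] σ) (𝓝 0) := by
  have := h.nonempty.to_subtype
  intro V hV
  obtain ⟨y, hy⟩ := eventually_atTop.1 (h.tendsto_deriv_right hV)
  rw [mem_map]
  filter_upwards [Ioo_mem_nhdsGT (h.lt_right y.2)] with s hs
  have hs' : s ∈ Ioo σ τ := ⟨hs.1, hs.2.trans (h.lt_left y.2)⟩
  refine hy ⟨_, h.invFunOn_mem hs'⟩ ((h.strictAntiOn.le_iff_ge (h.invFunOn_mem hs') y.2).1 ?_)
  rw [h.invFunOn_eq hs']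
  exact hs.2.le

lemma isFullLevelBranch (h : IsFullBranch ν f v v' I σ τ) :
    IsFullLevelBranch ν f (Function.invFunOn v I) (fun s => -v' (Function.invFunOn v I s)) σ τ where
  lt := let ⟨_, hr⟩ := h.nonempty; (h.lt_right hr).trans (h.lt_left hr)
  levelSystem := by
    have := h.ordConnected
    rw [← h.image_eq]
    exact h.radial.levelSystem h.isOpen h.pos h.deriv_neg
  tendsto_slope_left := by simpa using h.tendsto_deriv_invFunOn_right.neg
  tendsto_slope_right := by simpa using h.tendsto_deriv_invFunOn_left.neg
  force_nonpos := h.force_nonpos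
  force_nonneg := h.force_nonneg

lemma exists_eventually_eq (hν : 0 < ν) (hf : Continuous f) (h : IsFullBranch ν f v v' I σ τ) :
    ∃ x ∈ I, ∃ y ∈ I, ∀ {ι : Type*} {l : Filter ι} {X X' : ι → ℝ → ℝ},
      (∀ᶠ i in l, IsRadial ν f (X i) (X' i)) → TendstoUniformlyOn X v l (Icc x y) →
      TendstoUniformlyOn X' v' l (Icc x y) →
      ∀ᶠ ij in l ×ˢ l, ∃ t ∈ Icc x y, X ij.1 t = X ij.2 t := by
  have := h.ordConnected
  obtain ⟨a, ha, b, hb, hcross⟩ :=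
    h.isFullLevelBranch.exists_eventually_radius_eq hν hf.continuousOn
  obtain ⟨x, hx, hbx⟩ := h.exists_mem_gt hb.2
  obtain ⟨y, hy, hyx⟩ := h.exists_mem_lt (lt_min ha.1 (h.lt_right hx))
  obtain ⟨hya, hyx⟩ := lt_min_iff.1 hyx
  have hxy : x < y := (h.strictAntiOn.lt_iff_gt hy hx).1 hyx
  refine ⟨x, hx, y, hy, fun {ι l X X'} hrad hX hX' => ?_⟩
  obtain ⟨r, hr, hq, hsys⟩ := h.radial.exists_levelSystem_tendstoUniformlyOn h.isOpen h.pos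
    h.deriv_neg hx hy hxy.le hya hbx hrad hX hX'
  filter_upwards [hcross hr hq (hsys.mono fun i hi => hi.1), hsys.prod_mk hsys]
    with ij ⟨s, hs, heq⟩ ⟨⟨_, hmaps, hinv⟩, _, _, hinv'⟩
  refine ⟨r ij.1 s, hmaps hs, (hinv hs).trans ?_⟩
  rw [heq, hinv' hs]

end IsFullBranch

lemma map_neg_one_pow_mul_of_odd {R : Type*} [Ring R] {f : R → R} (hf : Function.Odd f) (i : ℕ)
    (s : R) : f ((-1) ^ i * s) = (-1) ^ i * f s := by
  rcases neg_one_pow_eq_or R i with hi | hi <;> simp [hi, hf s]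

lemma neg_one_pow_mul_right_inj {R : Type*} [Ring R] {i : ℕ} {x y : R} :
    (-1) ^ i * x = (-1) ^ i * y ↔ x = y :=
  (isUnit_one.neg.pow i).mul_right_inj

lemma hasDerivAt_Fint {f : ℝ → ℝ} (hf : Continuous f) (s : ℝ) : HasDerivAt (Fint f) (f s) s :=
  (hf.integral_hasStrictDerivAt 0 s).hasDerivAt

lemma continuous_Fint {f : ℝ → ℝ} (hf : Continuous f) : Continuous (Fint f) :=
  continuous_iff_continuousAt.2 fun s => (hasDerivAt_Fint hf s).continuousAt

/-! ### Energy -/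

lemma Fint_zero (f : ℝ → ℝ) : Fint f 0 = 0 := intervalIntegral.integral_same

lemma Fint_neg_one_pow_mul_of_odd {f : ℝ → ℝ} (hf : Function.Odd f) (i : ℕ) (s : ℝ) :
    Fint f ((-1) ^ i * s) = Fint f s := by
  have hneg : Fint f (-s) = Fint f s := by
    have hcomp := intervalIntegral.integral_comp_neg (a := 0) (b := s) f
    rw [show (fun x => f (-x)) = fun x => -f x from funext hf, intervalIntegral.integral_neg,
      neg_zero] at hcomp
    rw [Fint, Fint, intervalIntegral.integral_symm, ← hcomp, neg_neg]
  rcases neg_one_pow_eq_or ℝ i with hi | hi <;> simp [hi, hneg]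

namespace Paper.Hf1

variable {f : ℝ → ℝ} {b β : ℝ}

lemma odd (h : Hf1 f b β) : Function.Odd f := h.1

lemma b_pos (h : Hf1 f b β) : 0 < b := h.2.2.1

lemma beta_pos (h : Hf1 f b β) : 0 < β := h.b_pos.trans h.2.2.2.1

lemma nonpos_of_mem_Icc (h : Hf1 f b β) {s : ℝ} (hs : s ∈ Icc 0 b) : f s ≤ 0 :=
  h.2.2.2.2.2.1 s hs

lemma pos_of_beta_lt (h : Hf1 f b β) {s : ℝ} (hs : β < s) : 0 < f s :=
  h.2.2.2.2.1 s (h.2.2.2.1.trans hs)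

lemma neg_of_lt_neg_beta (h : Hf1 f b β) {s : ℝ} (hs : s < -β) : f s < 0 := by
  have := h.pos_of_beta_lt (lt_neg.1 hs)
  rwa [h.odd, neg_pos] at this

lemma Fint_nonpos (h : Hf1 f b β) (hf : Continuous f) {s : ℝ} (hs0 : 0 ≤ s) (hs : s ≤ β) :
    Fint f s ≤ 0 := by
  obtain ⟨-, -, -, -, hpos, hneg, -, hβ⟩ := h
  rcases le_total s b with hsb | hsb
  · rw [Fint, ← neg_nonneg, ← intervalIntegral.integral_neg]
    exact intervalIntegral.integral_nonneg hs0 fun x hx =>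
      neg_nonneg.2 (hneg x ⟨hx.1, hx.2.trans hsb⟩)
  · have hadd : Fint f s + ∫ t in s..β, f t = Fint f β :=
      intervalIntegral.integral_add_adjacent_intervals (hf.intervalIntegrable _ _)
        (hf.intervalIntegrable _ _)
    have hnonneg : ∫ _ in s..β, (0 : ℝ) ≤ ∫ t in s..β, f t :=
      intervalIntegral.integral_mono_on_of_le_Ioo hs (by simp) (hf.intervalIntegrable s β)
        fun x hx => (hpos x (hsb.trans_lt hx.1)).le
    rw [intervalIntegral.integral_zero] at hnonneg
    linarith

lemma beta_lt_of_Fint_pos (h : Hf1 f b β) (hf : Continuous f) {s : ℝ} (hs : 0 ≤ s)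
    (hF : 0 < Fint f s) : β < s := by
  by_contra! hle
  exact (h.Fint_nonpos hf hs hle).not_gt hF

end Paper.Hf1

namespace IsRadial

variable {ν : ℝ} {N : ℕ} {f v v' : ℝ → ℝ}

lemma neg_one_pow_mul (hf : Function.Odd f) (h : IsRadial ν f v v') (i : ℕ) :
    IsRadial ν f (fun r => (-1) ^ i * v r) (fun r => (-1) ^ i * v' r) := by
  refine ⟨fun r hr => (h.hasDerivAt r hr).const_mul _,
    fun r hr => ((h.hasDerivAt_deriv r hr).const_mul _).congr_deriv ?_⟩
  rw [map_neg_one_pow_mul_of_odd hf]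
  ring

lemma hasDerivAt_weight (h : IsRadial N f v v') {r : ℝ} (hr : 0 < r) :
    HasDerivAt (fun r => r ^ N * v' r) (-(r ^ N * f (v r))) r := by
  refine ((hasDerivAt_pow N r).mul (h.hasDerivAt_deriv r hr)).congr_deriv ?_
  rcases N with _ | N
  · simp
  · simp only [Nat.add_sub_cancel, Nat.cast_add, Nat.cast_one, pow_succ]
    field_simp
    ring

lemma hasDerivAt_energy (h : IsRadial ν f v v') (hf : Continuous f) {r : ℝ} (hr : 0 < r) :
    HasDerivAt (fun r => v' r ^ 2 / 2 + Fint f (v r)) (-(ν / r * v' r ^ 2)) r := by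
  refine ((((h.hasDerivAt_deriv r hr).pow 2).div_const 2).add
    ((hasDerivAt_Fint hf (v r)).comp r (h.hasDerivAt r hr))).congr_deriv ?_
  push_cast
  ring

end IsRadial

/-- `v` solves the radial equation with friction coefficient `N` on `(0, ∞)`, with `v` and its
derivative `v'` continuous up to `r = 0`. -/
structure IsRegularRadial (N : ℕ) (f v v' : ℝ → ℝ) : Prop extends IsRadial N f v v' where
  continuousOn_Ici : ContinuousOn v (Ici 0)
  continuousOn_deriv_Ici : ContinuousOn v' (Ici 0)

namespace IsRegularRadial

variable {N : ℕ} {f v v' : ℝ → ℝ} {x y : ℝ}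

lemma neg_one_pow_mul (hf : Function.Odd f) (h : IsRegularRadial N f v v') (i : ℕ) :
    IsRegularRadial N f (fun r => (-1) ^ i * v r) (fun r => (-1) ^ i * v' r) :=
  ⟨h.toIsRadial.neg_one_pow_mul hf i, h.continuousOn_Ici.const_mul _,
    h.continuousOn_deriv_Ici.const_mul _⟩

lemma strictAntiOn_Icc (h : IsRegularRadial N f v v') (hx : 0 ≤ x)
    (hneg : ∀ r ∈ Ioo x y, v' r < 0) : StrictAntiOn v (Icc x y) := by
  refine strictAntiOn_of_deriv_neg (convex_Icc x y)
    (h.continuousOn_Ici.mono fun r hr => hx.trans hr.1) fun r hr => ?_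
  rw [interior_Icc] at hr
  rw [(h.hasDerivAt r (hx.trans_lt hr.1)).deriv]
  exact hneg r hr

lemma continuousOn_weight (h : IsRegularRadial N f v v') :
    ContinuousOn (fun r => r ^ N * v' r) (Ici 0) :=
  (continuous_pow N).continuousOn.mul h.continuousOn_deriv_Ici

lemma weight_strictAntiOn (h : IsRegularRadial N f v v') (hx : 0 ≤ x)
    (hf : ∀ r ∈ Ioo x y, 0 < f (v r)) : StrictAntiOn (fun r => r ^ N * v' r) (Icc x y) := by
  refine strictAntiOn_of_deriv_neg (convex_Icc x y)
    (h.continuousOn_weight.mono fun r hr => hx.trans hr.1) fun r hr => ?_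
  rw [interior_Icc] at hr
  have hr0 : 0 < r := hx.trans_lt hr.1
  rw [(h.hasDerivAt_weight hr0).deriv]
  exact neg_neg_of_pos (mul_pos (pow_pos hr0 N) (hf r hr))

lemma weight_monotoneOn (h : IsRegularRadial N f v v') (hx : 0 ≤ x)
    (hf : ∀ r, x < r → f (v r) ≤ 0) : MonotoneOn (fun r => r ^ N * v' r) (Ici x) := by
  refine monotoneOn_of_hasDerivWithinAt_nonneg (convex_Ici x)
    (h.continuousOn_weight.mono (Ici_subset_Ici.2 hx))
    (f' := fun r => -(r ^ N * f (v r))) (fun r hr => ?_) fun r hr => ?_ <;>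
  rw [interior_Ici] at hr
  · exact (h.hasDerivAt_weight (hx.trans_lt hr)).hasDerivWithinAt
  · exact neg_nonneg.2 (mul_nonpos_of_nonneg_of_nonpos (pow_pos (hx.trans_lt hr) N).le (hf r hr))

lemma deriv_neg_of_critical_left (h : IsRegularRadial N f v v') (hx : 0 ≤ x) (hcrit : v' x = 0)
    (hf : ∀ r ∈ Ioo x y, 0 < f (v r)) : ∀ r ∈ Ioc x y, v' r < 0 := by
  intro r hr
  have := h.weight_strictAntiOn hx hf (left_mem_Icc.2 (hr.1.le.trans hr.2)) ⟨hr.1.le, hr.2⟩ hr.1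
  simp only [hcrit, mul_zero] at this
  exact neg_of_mul_neg_right this (pow_pos (hx.trans_lt hr.1) N).le

lemma deriv_pos_of_critical_right (h : IsRegularRadial N f v v') (hx : 0 < x) (hcrit : v' y = 0)
    (hf : ∀ r ∈ Ioo x y, 0 < f (v r)) : ∀ r ∈ Ico x y, 0 < v' r := by
  intro r hr
  have := h.weight_strictAntiOn hx.le hf ⟨hr.1, hr.2.le⟩ (right_mem_Icc.2 (hr.1.trans hr.2.le)) hr.2
  simp only [hcrit, mul_zero] at this
  exact pos_of_mul_pos_right this (pow_pos (hx.trans_le hr.1) N).le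

lemma continuousOn_energy (h : IsRegularRadial N f v v') (hf : Continuous f) :
    ContinuousOn (fun r => v' r ^ 2 / 2 + Fint f (v r)) (Ici 0) :=
  ((h.continuousOn_deriv_Ici.pow 2).div_const 2).add
    ((continuous_Fint hf).comp_continuousOn h.continuousOn_Ici)

lemma energy_antitoneOn (h : IsRegularRadial N f v v') (hf : Continuous f) :
    AntitoneOn (fun r => v' r ^ 2 / 2 + Fint f (v r)) (Ici 0) := by
  refine antitoneOn_of_hasDerivWithinAt_nonpos (convex_Ici 0) (h.continuousOn_energy hf)
    (f' := fun r => -(N / r * v' r ^ 2)) (fun r hr => ?_) fun r hr => ?_ <;>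
  rw [interior_Ici, mem_Ioi] at hr
  · exact (h.hasDerivAt_energy hf hr).hasDerivWithinAt
  · exact neg_nonpos.2 (by positivity)

lemma energy_strictAntiOn (h : IsRegularRadial N f v v') (hf : Continuous f) (hN : 0 < N)
    (hx : 0 ≤ x) (hne : ∀ r ∈ Ioo x y, v' r ≠ 0) :
    StrictAntiOn (fun r => v' r ^ 2 / 2 + Fint f (v r)) (Icc x y) := by
  refine strictAntiOn_of_deriv_neg (convex_Icc x y)
    ((h.continuousOn_energy hf).mono fun r hr => hx.trans hr.1) fun r hr => ?_
  rw [interior_Icc] at hr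
  have hr0 : 0 < r := hx.trans_lt hr.1
  rw [(h.hasDerivAt_energy hf hr0).deriv]
  have := hne r hr
  exact neg_neg_of_pos (by positivity)

lemma tendsto_deriv_atTop_zero (h : IsRegularRadial N f v v') (hN : 0 < N) {b : ℝ} (hb : 0 < b)
    (hf : ∀ s ∈ Icc 0 b, f s ≤ 0) (hpos : ∀ᶠ r in atTop, 0 < v r)
    (hneg : ∀ᶠ r in atTop, v' r < 0) (hlim : Tendsto v atTop (𝓝 0)) : Tendsto v' atTop (𝓝 0) := by
  obtain ⟨x, hx⟩ := eventually_atTop.1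
    (((hlim.eventually_lt_const hb).and hpos).and (hneg.and (eventually_ge_atTop 1)))
  have hx1 : 1 ≤ x := (hx x le_rfl).2.2
  have hmono := h.weight_monotoneOn (zero_le_one.trans hx1) fun r hr =>
    hf (v r) ⟨(hx r hr.le).1.2.le, (hx r hr.le).1.1.le⟩
  have hlow : ∀ r ≥ x, x ^ N * v' x / r ≤ v' r := by
    intro r hr
    have hr1 : 1 ≤ r := hx1.trans hr
    calc x ^ N * v' x / r ≤ r ^ N * v' r / r := by
          gcongr ?_ / r
          exact hmono self_mem_Ici hr hr
      _ ≤ r * v' r / r := by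
          gcongr ?_ / r
          exact mul_le_mul_of_nonpos_right (le_self_pow₀ hr1 hN.ne') (hx r hr).2.1.le
      _ = v' r := mul_div_cancel_left₀ _ (by positivity)
  exact tendsto_of_tendsto_of_tendsto_of_le_of_le' (tendsto_const_nhds.div_atTop tendsto_id)
    tendsto_const_nhds (eventually_atTop.2 ⟨x, hlow⟩) (hneg.mono fun r hr => hr.le)

end IsRegularRadial

lemma tendstoUniformlyOn_of_continuousOn_prod {X Y E : Type*} [TopologicalSpace X]
    [TopologicalSpace Y] [UniformSpace E] {g : X × Y → E} {x : X} {U : Set X} {K : Set Y}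
    (hU : U ∈ 𝓝 x) (hK : IsCompact K) (hg : ContinuousOn g (U ×ˢ K)) :
    TendstoUniformlyOn (fun a r => g (a, r)) (fun r => g (x, r)) (𝓝 x) K := by
  intro V hV
  obtain ⟨W, hW, hWV⟩ := hK.mem_uniformity_of_prod (f := fun a r => g (a, r)) hg
    (mem_of_mem_nhds hU) (symm_le_uniformity hV)
  rw [nhdsWithin_eq_nhds.2 hU] at hW
  filter_upwards [hW] with a ha r hr using hWV a ha r hr

lemma exists_eventually_forall_lt_of_continuousOn_prod {X : Type*} [TopologicalSpace X]
    {g : X × ℝ → ℝ} {x : X} {U : Set X} {J : Set ℝ} {T c : ℝ} (hU : U ∈ 𝓝 x) (hT : T ∈ J)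
    (hg : ContinuousOn g (U ×ˢ J)) (hc : c < g (x, T)) :
    ∃ ε > 0, ∀ᶠ a in 𝓝 x, ∀ r ∈ J ∩ Icc (T - ε) (T + ε), c < g (a, r) := by
  have hev := (hg (x, T) ⟨mem_of_mem_nhds hU, hT⟩).eventually_const_lt hc
  rw [nhdsWithin_prod_eq, nhdsWithin_eq_nhds.2 hU] at hev
  obtain ⟨⟨W, ε⟩, ⟨hW, hε⟩, hlt⟩ :=
    ((𝓝 x).basis_sets.prod (Metric.nhds_basis_closedBall.inf_principal J)).eventually_iff.1 hev
  refine ⟨ε, hε, mem_of_superset hW fun a ha r hr => hlt (x := (a, r)) ⟨ha, ?_, hr.1⟩⟩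
  rw [Real.closedBall_eq_Icc]
  exact hr.2

namespace Paper.Family

variable {N : ℕ} {f : ℝ → ℝ} {u : ℝ → ℝ → ℝ} {α : ℝ}

lemma isRegularRadial (hu : Family (N + 1) f u) (hα : 0 < α) :
    IsRegularRadial N f (u α) (deriv (u α)) := by
  obtain ⟨-, -, hc, hd, he⟩ := hu.1 α hα
  refine ⟨⟨fun r hr => (hd r hr).1.hasDerivAt, fun r hr => ?_⟩, hc, ?_⟩
  · refine (hd r hr).2.hasDerivAt.congr_deriv ?_
    have := he r hr
    push_cast at this
    rw [add_sub_cancel_right] at this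
    linarith
  · exact hu.2.2.comp (f := fun r => (α, r)) (by fun_prop) fun r hr => ⟨hα, hr⟩

lemma apply_zero (hu : Family (N + 1) f u) (hα : 0 < α) : u α 0 = α := (hu.1 α hα).1

lemma deriv_zero (hu : Family (N + 1) f u) (hα : 0 < α) : deriv (u α) 0 = 0 := (hu.1 α hα).2.1

lemma continuousOn_neg_one_pow_mul (hu : Family (N + 1) f u) (i : ℕ) :
    ContinuousOn (fun p : ℝ × ℝ => (-1) ^ i * u p.1 p.2) (Ioi 0 ×ˢ Ici 0) :=
  continuousOn_const.mul hu.2.1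

lemma continuousOn_neg_one_pow_mul_deriv (hu : Family (N + 1) f u) (i : ℕ) :
    ContinuousOn (fun p : ℝ × ℝ => (-1) ^ i * deriv (u p.1) p.2) (Ioi 0 ×ˢ Ici 0) :=
  continuousOn_const.mul hu.2.2

lemma tendstoUniformlyOn (hu : Family (N + 1) f u) (hα : 0 < α) {K : Set ℝ} (hK : IsCompact K)
    (hK0 : K ⊆ Ici 0) (i : ℕ) : TendstoUniformlyOn (fun a r => (-1) ^ i * u a r)
      (fun r => (-1) ^ i * u α r) (𝓝 α) K :=
  tendstoUniformlyOn_of_continuousOn_prod (g := fun p : ℝ × ℝ => (-1) ^ i * u p.1 p.2)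
    (Ioi_mem_nhds hα) hK ((hu.continuousOn_neg_one_pow_mul i).mono (prod_mono_right hK0))

lemma tendstoUniformlyOn_deriv (hu : Family (N + 1) f u) (hα : 0 < α) {K : Set ℝ}
    (hK : IsCompact K) (hK0 : K ⊆ Ici 0) (i : ℕ) :
    TendstoUniformlyOn (fun a r => (-1) ^ i * deriv (u a) r)
      (fun r => (-1) ^ i * deriv (u α) r) (𝓝 α) K :=
  tendstoUniformlyOn_of_continuousOn_prod (g := fun p : ℝ × ℝ => (-1) ^ i * deriv (u p.1) p.2)
    (Ioi_mem_nhds hα) hK ((hu.continuousOn_neg_one_pow_mul_deriv i).mono (prod_mono_right hK0))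

end Paper.Family

/-! ### The radii `T_i` and `Z_i` -/

lemma mem_ZsetK_succ {u : ℝ → ℝ → ℝ} {i : ℕ} {α r : ℝ} :
    r ∈ ZsetK u (i + 1) α ↔ Tk u i α < r ∧ ∀ s ∈ Ioo (Tk u i α) r,
      0 < (-1) ^ i * u α s ∧ (-1) ^ i * deriv (u α) s < 0 := by
  simp only [ZsetK, ZsetAux, Nat.add_sub_cancel, mem_ofPred_eq, pow_succ, mul_neg, mul_one,
    neg_mul, neg_lt_zero, neg_pos]

/-- The part of `u` between `T_i α` and `T_{i+1} α` meets zero transversally and `T_{i+1} α` is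
attained. -/
structure CrossesZero (u : ℝ → ℝ → ℝ) (i : ℕ) (α : ℝ) : Prop where
  uAtZ_eq_zero : uAtZ u (i + 1) α = 0
  duAtZ_pos : 0 < (-1) ^ (i + 1) * duAtZ u (i + 1) α
  not_Ftil : ¬Ftil u (i + 2) α

lemma pos_and_uAtZ_of_mem_Nk {u : ℝ → ℝ → ℝ} {α : ℝ} {m : ℕ} (h : α ∈ Nk u (m + 1)) :
    0 < α ∧ (∀ i < m, CrossesZero u i α) ∧ uAtZ u (m + 1) α = 0 ∧
      0 < (-1) ^ (m + 1) * duAtZ u (m + 1) α := by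
  induction m with
  | zero => exact ⟨h.1, by simp, h.2.1, by simpa using h.2.2⟩
  | succ m ih =>
    obtain ⟨hmem, hF, hz, hdz⟩ := h
    obtain ⟨hα, hcross, hz', hdz'⟩ := ih hmem
    refine ⟨hα, fun i hi => ?_, hz, hdz⟩
    rcases (Nat.lt_succ_iff_lt_or_eq).1 hi with hi | rfl
    · exact hcross i hi
    · exact ⟨hz', hdz', hF⟩

lemma mem_Gk_succ {u : ℝ → ℝ → ℝ} {α : ℝ} {m : ℕ} (h : α ∈ Gk u (m + 1)) :
    0 < α ∧ (∀ i < m, CrossesZero u i α) ∧ uAtZ u (m + 1) α = 0 ∧ duAtZ u (m + 1) α = 0 := by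
  rcases m with _ | m
  · exact ⟨h.1, by simp, h.2.1, h.2.2⟩
  · obtain ⟨hmem, hF, hz, hdz⟩ := h
    obtain ⟨hα, hcross, hz', hdz'⟩ := pos_and_uAtZ_of_mem_Nk hmem
    refine ⟨hα, fun i hi => ?_, hz, hdz⟩
    rcases (Nat.lt_succ_iff_lt_or_eq).1 hi with hi | rfl
    · exact hcross i hi
    · exact ⟨hz', hdz', hF⟩

/-- The open interval `(T_i α, Z_{i+1} α)`, whose right end may be infinite. -/
def branch (u : ℝ → ℝ → ℝ) (i : ℕ) (α : ℝ) : Set ℝ :=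
  {r | Tk u i α < r ∧ ∃ y ∈ ZsetK u (i + 1) α, r < y}

section Branch

variable {u : ℝ → ℝ → ℝ} {i : ℕ} {α r : ℝ}

lemma branch_eq_Ioo (hne : (ZsetK u (i + 1) α).Nonempty) (hbdd : BddAbove (ZsetK u (i + 1) α)) :
    branch u i α = Ioo (Tk u i α) (Zk u (i + 1) α) :=
  Set.ext fun _ => and_congr_right fun _ => (lt_csSup_iff hbdd hne).symm

lemma branch_eq_Ioi (hbdd : ¬BddAbove (ZsetK u (i + 1) α)) : branch u i α = Ioi (Tk u i α) :=
  Set.ext fun r => and_iff_left (not_bddAbove_iff.1 hbdd r)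

lemma Tk_lt_Zk_succ (hne : (ZsetK u (i + 1) α).Nonempty) (hbdd : BddAbove (ZsetK u (i + 1) α)) :
    Tk u i α < Zk u (i + 1) α :=
  let ⟨_, hy⟩ := hne; (mem_ZsetK_succ.1 hy).1.trans_le (le_csSup hbdd hy)

lemma branch_nonempty (hne : (ZsetK u (i + 1) α).Nonempty) : (branch u i α).Nonempty :=
  let ⟨y, hy⟩ := hne
  let ⟨r, hr⟩ := exists_between (mem_ZsetK_succ.1 hy).1
  ⟨r, hr.1, y, hy, hr.2⟩

lemma isOpen_branch (u : ℝ → ℝ → ℝ) (i : ℕ) (α : ℝ) : IsOpen (branch u i α) := by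
  have : branch u i α = ⋃ y ∈ ZsetK u (i + 1) α, Ioo (Tk u i α) y := by
    ext r
    simp only [branch, mem_ofPred_eq, mem_iUnion₂, mem_Ioo, exists_prop]
    tauto
  rw [this]
  exact isOpen_biUnion fun _ _ => isOpen_Ioo

lemma Icc_subset_branch {x : ℝ} (hx : Tk u i α < x) (hr : r ∈ branch u i α) :
    Icc x r ⊆ branch u i α :=
  fun _ ht => let ⟨y, hy, hry⟩ := hr.2; ⟨hx.trans_le ht.1, y, hy, ht.2.trans_lt hry⟩

lemma ordConnected_branch (u : ℝ → ℝ → ℝ) (i : ℕ) (α : ℝ) : (branch u i α).OrdConnected :=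
  ⟨fun _ hx _ hy => Icc_subset_branch hx.1 hy⟩

lemma pos_of_mem_branch (hr : r ∈ branch u i α) : 0 < (-1) ^ i * u α r :=
  let ⟨hTr, _, hy, hry⟩ := hr; ((mem_ZsetK_succ.1 hy).2 r ⟨hTr, hry⟩).1

lemma deriv_neg_of_mem_branch (hr : r ∈ branch u i α) : (-1) ^ i * deriv (u α) r < 0 :=
  let ⟨hTr, _, hy, hry⟩ := hr; ((mem_ZsetK_succ.1 hy).2 r ⟨hTr, hry⟩).2

lemma lt_Zk_of_mem_branch (hr : r ∈ branch u i α) (hbdd : BddAbove (ZsetK u (i + 1) α)) :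
    r < Zk u (i + 1) α :=
  let ⟨_, _, hy, hry⟩ := hr; hry.trans_le (le_csSup hbdd hy)

lemma branch_subset_Ioi (hT : 0 ≤ Tk u i α) : branch u i α ⊆ Ioi 0 := fun _ hr => hT.trans_lt hr.1

lemma tendsto_branch_atBot {g : ℝ → ℝ} (hg : ContinuousOn g (Ici 0)) (hT : 0 ≤ Tk u i α)
    (hne : (ZsetK u (i + 1) α).Nonempty) :
    Tendsto (fun r : branch u i α => g r) atBot (𝓝 (g (Tk u i α))) := by
  have hlim : Tendsto g (𝓝[>] Tk u i α) (𝓝 (g (Tk u i α))) :=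
    (hg _ hT).mono_left (nhdsWithin_mono _ fun r hr => hT.trans (le_of_lt hr))
  by_cases hbdd : BddAbove (ZsetK u (i + 1) α)
  · rw [branch_eq_Ioo hne hbdd]
    exact (tendsto_comp_coe_Ioo_atBot (Tk_lt_Zk_succ hne hbdd)).2 hlim
  · rw [branch_eq_Ioi hbdd]
    exact (tendsto_comp_coe_Ioi_atBot).2 hlim

lemma tendsto_branch_atTop {g : ℝ → ℝ} {c : ℝ} (hg : ContinuousOn g (Ici 0)) (hT : 0 ≤ Tk u i α)
    (hne : (ZsetK u (i + 1) α).Nonempty)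
    (hfin : BddAbove (ZsetK u (i + 1) α) → g (Zk u (i + 1) α) = c)
    (hinf : ¬BddAbove (ZsetK u (i + 1) α) → Tendsto g atTop (𝓝 c)) :
    Tendsto (fun r : branch u i α => g r) atTop (𝓝 c) := by
  by_cases hbdd : BddAbove (ZsetK u (i + 1) α)
  · have hZ : 0 < Zk u (i + 1) α := hT.trans_lt (Tk_lt_Zk_succ hne hbdd)
    rw [branch_eq_Ioo hne hbdd, ← hfin hbdd]
    exact (tendsto_comp_coe_Ioo_atTop (Tk_lt_Zk_succ hne hbdd)).2
      (((hg _ hZ.le).continuousAt (Ici_mem_nhds hZ)).mono_left nhdsWithin_le_nhds)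
  · rw [branch_eq_Ioi hbdd]
    exact tendsto_comp_val_Ioi_atTop.2 (hinf hbdd)

end Branch

namespace Paper.Family

variable {N : ℕ} {f : ℝ → ℝ} {b β : ℝ} {u : ℝ → ℝ → ℝ} {α : ℝ} {i : ℕ}

lemma ZsetK_nonempty (hu : Family (N + 1) f u) (hα : 0 < α) (hz : uAtZ u (i + 1) α = 0) :
    (ZsetK u (i + 1) α).Nonempty := by
  by_contra hemp
  rw [not_nonempty_iff_eq_empty] at hemp
  rw [uAtZ, if_pos (hemp ▸ bddAbove_empty),
    show Zk u (i + 1) α = sSup (ZsetK u (i + 1) α) from rfl, hemp, Real.sSup_empty,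
    hu.apply_zero hα] at hz
  exact hα.ne' hz

lemma strictAntiOn_branch (hf : Function.Odd f) (hu : Family (N + 1) f u) (hα : 0 < α)
    (hT : 0 ≤ Tk u i α) : StrictAntiOn (fun r => (-1) ^ i * u α r) (branch u i α) :=
  have := ordConnected_branch u i α
  ((hu.isRegularRadial hα).neg_one_pow_mul hf i).strictAntiOn (branch_subset_Ioi hT)
    fun _ => deriv_neg_of_mem_branch

lemma tendsto_atTop_zero (hf : Function.Odd f) (hu : Family (N + 1) f u) (hα : 0 < α)
    (hT : 0 ≤ Tk u i α) (hz : uAtZ u (i + 1) α = 0) (hbdd : ¬BddAbove (ZsetK u (i + 1) α)) :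
    Tendsto (u α) atTop (𝓝 0) := by
  obtain ⟨l, hl⟩ : ∃ l, Tendsto (fun r : branch u i α => (-1) ^ i * u α r) atTop (𝓝 l) :=
    ⟨_, tendsto_atTop_ciInf (f := fun r : branch u i α => (-1) ^ i * u α r)
      (fun x y hxy => (hu.strictAntiOn_branch hf hα hT).antitoneOn x.2 y.2 hxy)
      ⟨0, forall_mem_range.2 fun r => (pos_of_mem_branch r.2).le⟩⟩
  rw [branch_eq_Ioi hbdd] at hl
  have hlim := ((tendsto_comp_val_Ioi_atTop (f := fun r => (-1) ^ i * u α r)).1 hl).const_mul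
    ((-1) ^ i)
  simp only [← mul_assoc, ← mul_pow, neg_mul_neg, one_mul, one_pow] at hlim
  rw [uAtZ, if_neg hbdd, hlim.limUnder_eq] at hz
  rwa [hz] at hlim

lemma tendsto_deriv_atTop_zero (h1 : Hf1 f b β) (hN : 0 < N) (hu : Family (N + 1) f u)
    (hα : 0 < α) (hT : 0 ≤ Tk u i α) (hz : uAtZ u (i + 1) α = 0)
    (hbdd : ¬BddAbove (ZsetK u (i + 1) α)) : Tendsto (deriv (u α)) atTop (𝓝 0) := by
  have hmem : ∀ᶠ r in atTop, r ∈ branch u i α := by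
    rw [branch_eq_Ioi hbdd]
    exact Ioi_mem_atTop _
  have hlim := (hu.tendsto_atTop_zero h1.odd hα hT hz hbdd).const_mul ((-1) ^ i)
  rw [mul_zero] at hlim
  have := (((hu.isRegularRadial hα).neg_one_pow_mul h1.odd i).tendsto_deriv_atTop_zero hN h1.b_pos
    (fun _ => h1.nonpos_of_mem_Icc) (hmem.mono fun _ => pos_of_mem_branch)
    (hmem.mono fun _ => deriv_neg_of_mem_branch) hlim).const_mul ((-1) ^ i)
  simpa only [← mul_assoc, ← mul_pow, neg_mul_neg, one_mul, one_pow, mul_zero] using this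

lemma bddAbove_of_duAtZ_ne_zero (h1 : Hf1 f b β) (hN : 0 < N) (hu : Family (N + 1) f u)
    (hα : 0 < α) (hT : 0 ≤ Tk u i α) (hz : uAtZ u (i + 1) α = 0) (hdz : duAtZ u (i + 1) α ≠ 0) :
    BddAbove (ZsetK u (i + 1) α) := by
  by_contra hbdd
  rw [duAtZ, if_neg hbdd, (hu.tendsto_deriv_atTop_zero h1 hN hα hT hz hbdd).limUnder_eq] at hdz
  exact hdz rfl

lemma apply_Tk_nonneg (hf : Function.Odd f) (hu : Family (N + 1) f u) (hα : 0 < α)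
    (hT : 0 ≤ Tk u i α) (hz : uAtZ u (i + 1) α = 0) : 0 ≤ (-1) ^ i * u α (Tk u i α) := by
  have hne := hu.ZsetK_nonempty hα hz
  have := (branch_nonempty hne).to_subtype
  have := ordConnected_branch u i α
  exact ge_of_tendsto' (tendsto_branch_atBot
    ((hu.isRegularRadial hα).neg_one_pow_mul hf i).continuousOn_Ici hT hne)
    fun r => (pos_of_mem_branch r.2).le

lemma tendsto_branch_zero (hf : Function.Odd f) (hu : Family (N + 1) f u) (hα : 0 < α)
    (hT : 0 ≤ Tk u i α) (hz : uAtZ u (i + 1) α = 0) :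
    Tendsto (fun r : branch u i α => (-1) ^ i * u α r) atTop (𝓝 0) := by
  rw [← mul_zero ((-1) ^ i)]
  refine (tendsto_branch_atTop (hu.isRegularRadial hα).continuousOn_Ici hT
    (hu.ZsetK_nonempty hα hz) (fun hbdd => ?_)
    (hu.tendsto_atTop_zero hf hα hT hz)).const_mul _
  rwa [uAtZ, if_pos hbdd] at hz

lemma tendsto_deriv_branch_zero (h1 : Hf1 f b β) (hN : 0 < N) (hu : Family (N + 1) f u)
    (hα : 0 < α) (hT : 0 ≤ Tk u i α) (hz : uAtZ u (i + 1) α = 0) (hdz : duAtZ u (i + 1) α = 0) :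
    Tendsto (fun r : branch u i α => (-1) ^ i * deriv (u α) r) atTop (𝓝 0) := by
  rw [← mul_zero ((-1) ^ i)]
  refine (tendsto_branch_atTop (hu.isRegularRadial hα).continuousOn_deriv_Ici hT
    (hu.ZsetK_nonempty hα hz) (fun hbdd => ?_)
    (hu.tendsto_deriv_atTop_zero h1 hN hα hT hz)).const_mul _
  rwa [duAtZ, if_pos hbdd] at hdz

lemma isFullBranch_branch (h1 : Hf1 f b β) (hN : 0 < N) (hu : Family (N + 1) f u) (hα : 0 < α)
    (hT : 0 ≤ Tk u i α) (hd : deriv (u α) (Tk u i α) = 0) (hβ : β < (-1) ^ i * u α (Tk u i α))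
    (hz : uAtZ u (i + 1) α = 0) (hdz : duAtZ u (i + 1) α = 0) :
    IsFullBranch N f (fun r => (-1) ^ i * u α r) (fun r => (-1) ^ i * deriv (u α) r)
      (branch u i α) 0 ((-1) ^ i * u α (Tk u i α)) := by
  have hw := (hu.isRegularRadial hα).neg_one_pow_mul h1.odd i
  have hne := hu.ZsetK_nonempty hα hz
  exact {
    radial := hw.toIsRadial
    isOpen := isOpen_branch u i α
    ordConnected := ordConnected_branch u i α
    nonempty := branch_nonempty hne
    pos := branch_subset_Ioi hT
    deriv_neg := fun _ => deriv_neg_of_mem_branch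
    tendsto_left := tendsto_branch_atBot hw.continuousOn_Ici hT hne
    tendsto_deriv_left := by
      simpa only [hd, mul_zero] using tendsto_branch_atBot hw.continuousOn_deriv_Ici hT hne
    tendsto_right := hu.tendsto_branch_zero h1.odd hα hT hz
    tendsto_deriv_right := hu.tendsto_deriv_branch_zero h1 hN hα hT hz hdz
    force_nonneg := by
      filter_upwards [mem_nhdsWithin_of_mem_nhds (Ioi_mem_nhds hβ)] with s hs
        using (h1.pos_of_beta_lt hs).le
    force_nonpos := by
      filter_upwards [Ioo_mem_nhdsGT h1.b_pos] with s hs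
        using h1.nonpos_of_mem_Icc ⟨hs.1.le, hs.2.le⟩ }

lemma Fint_Tk_pos (hf : Continuous f) (h1 : Hf1 f b β) (hN : 0 < N) (hu : Family (N + 1) f u)
    (hα : 0 < α) (hT : 0 ≤ Tk u i α) (hd : deriv (u α) (Tk u i α) = 0)
    (hz : uAtZ u (i + 1) α = 0) (hdz : duAtZ u (i + 1) α = 0) :
    0 < Fint f ((-1) ^ i * u α (Tk u i α)) := by
  have hw := (hu.isRegularRadial hα).neg_one_pow_mul h1.odd i
  obtain ⟨r, hr⟩ := branch_nonempty (hu.ZsetK_nonempty hα hz)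
  have := ordConnected_branch u i α
  have hlim := (((hu.tendsto_deriv_branch_zero h1 hN hα hT hz hdz).pow 2).div_const 2).add
    ((continuous_Fint hf).continuousAt.tendsto.comp (hu.tendsto_branch_zero h1.odd hα hT hz))
  rw [Fint_zero, zero_pow two_ne_zero, zero_div, add_zero] at hlim
  have hnonneg := Antitone.le_of_tendsto (f := fun r : branch u i α =>
    ((-1) ^ i * deriv (u α) r) ^ 2 / 2 + Fint f ((-1) ^ i * u α r)) (fun x y hxy =>
      hw.energy_antitoneOn hf (hT.trans x.2.1.le) (hT.trans y.2.1.le) hxy) hlim ⟨r, hr⟩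
  have hlt := hw.energy_strictAntiOn hf hN hT (fun t ht => (deriv_neg_of_mem_branch
    (Icc_subset_branch ht.1 hr ⟨le_rfl, ht.2.le⟩)).ne) (left_mem_Icc.2 hr.1.le)
    (right_mem_Icc.2 hr.1.le) hr.1
  simp only [hd, mul_zero, zero_pow two_ne_zero, zero_div, zero_add] at hlt
  exact hnonneg.trans_lt hlt

end Paper.Family

section FirstZero

variable {g : ℝ → ℝ} {x z : ℝ}

lemma exists_isLeast_zero (hg : ContinuousOn g (Ici x)) (hx : g x < 0)
    (hex : ∃ r > x, 0 ≤ g r) : ∃ z, IsLeast {r | x < r ∧ g r = 0} z := by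
  have hzeros : {r | x < r ∧ g r = 0} = Ici x ∩ g ⁻¹' {0} := by
    ext r
    refine ⟨fun hr => ⟨hr.1.le, hr.2⟩, fun hr => ⟨lt_of_le_of_ne hr.1 ?_, hr.2⟩⟩
    rintro rfl
    exact hx.ne hr.2
  obtain ⟨r, hxr, hr⟩ := hex
  obtain ⟨y, hy, hy0⟩ := intermediate_value_Icc hxr.le (hg.mono Icc_subset_Ici_self) ⟨hx.le, hr⟩
  rw [hzeros]
  exact ⟨_, (hg.preimage_isClosed_of_isClosed isClosed_Ici isClosed_singleton).isLeast_csInf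
    ⟨y, hy.1, hy0⟩ ⟨x, fun t ht => ht.1⟩⟩

lemma neg_of_isLeast_zero (hg : ContinuousOn g (Ici x)) (hx : g x < 0)
    (hz : IsLeast {r | x < r ∧ g r = 0} z) : ∀ r ∈ Ico x z, g r < 0 := by
  intro r hr
  by_contra! h0
  obtain ⟨y, hy, hy0⟩ := intermediate_value_Icc hr.1 (hg.mono Icc_subset_Ici_self) ⟨hx.le, h0⟩
  have hxy : x < y := lt_of_le_of_ne hy.1 (by rintro rfl; exact hx.ne hy0)
  exact (hz.2 ⟨hxy, hy0⟩).not_gt (hy.2.trans_lt hr.2)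

end FirstZero

/-- `(-1)^i u` strictly decreases from `T_i α` to `T_{i+1} α`. -/
structure Descends (u : ℝ → ℝ → ℝ) (i : ℕ) (α : ℝ) : Prop where
  lt : Tk u i α < Tk u (i + 1) α
  deriv_neg : ∀ r ∈ Ioo (Tk u i α) (Tk u (i + 1) α), (-1) ^ i * deriv (u α) r < 0

lemma Tk_succ_eq_of_isLeast {u : ℝ → ℝ → ℝ} {i : ℕ} {α τ : ℝ}
    (h : IsLeast {r | Zk u (i + 1) α < r ∧ (-1) ^ i * deriv (u α) r = 0} τ) :
    Tk u (i + 1) α = τ := by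
  simp only [neg_one_pow_mul_eq_zero_iff] at h
  exact h.csInf_eq

lemma Zk_succ_eq_of_apply_eq_zero {u : ℝ → ℝ → ℝ} {i : ℕ} {α z : ℝ} (hTz : Tk u i α < z)
    (hsign : ∀ r ∈ Ioo (Tk u i α) z, 0 < (-1) ^ i * u α r ∧ (-1) ^ i * deriv (u α) r < 0)
    (hz : u α z = 0) : Zk u (i + 1) α = z := by
  refine IsGreatest.csSup_eq (s := ZsetK u (i + 1) α)
    ⟨mem_ZsetK_succ.2 ⟨hTz, hsign⟩, fun r hr => ?_⟩
  by_contra! hzr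
  have := ((mem_ZsetK_succ.1 hr).2 z ⟨hTz, hzr⟩).1
  rw [hz, mul_zero] at this
  exact this.false

namespace CrossesZero

variable {N : ℕ} {f : ℝ → ℝ} {b β : ℝ} {u : ℝ → ℝ → ℝ} {i : ℕ} {α : ℝ}

lemma bddAbove (h : CrossesZero u i α) (h1 : Hf1 f b β) (hN : 0 < N) (hu : Family (N + 1) f u)
    (hα : 0 < α) (hT : 0 ≤ Tk u i α) : BddAbove (ZsetK u (i + 1) α) :=
  hu.bddAbove_of_duAtZ_ne_zero h1 hN hα hT h.uAtZ_eq_zero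
    (right_ne_zero_of_mul h.duAtZ_pos.ne')

lemma deriv_Zk_neg (h : CrossesZero u i α) (hbdd : BddAbove (ZsetK u (i + 1) α)) :
    (-1) ^ i * deriv (u α) (Zk u (i + 1) α) < 0 := by
  have := h.duAtZ_pos
  rw [duAtZ, if_pos hbdd, pow_succ] at this
  linarith

lemma exists_deriv_nonneg (h : CrossesZero u i α) :
    ∃ r > Zk u (i + 1) α, 0 ≤ (-1) ^ i * deriv (u α) r := by
  have := h.not_Ftil
  simpa [Ftil, pow_succ] using this

lemma descends (h : CrossesZero u i α) (h1 : Hf1 f b β) (hN : 0 < N) (hu : Family (N + 1) f u)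
    (hα : 0 < α) (hT : 0 ≤ Tk u i α) : Descends u i α ∧ deriv (u α) (Tk u (i + 1) α) = 0 := by
  have hbdd := h.bddAbove h1 hN hu hα hT
  have hne := hu.ZsetK_nonempty hα h.uAtZ_eq_zero
  have hTZ := Tk_lt_Zk_succ hne hbdd
  have hcont : ContinuousOn (fun r => (-1) ^ i * deriv (u α) r) (Ici (Zk u (i + 1) α)) :=
    (((hu.isRegularRadial hα).neg_one_pow_mul h1.odd i).continuousOn_deriv_Ici).mono
      (Ici_subset_Ici.2 (hT.trans hTZ.le))
  obtain ⟨τ, hτ⟩ := exists_isLeast_zero hcont (h.deriv_Zk_neg hbdd) h.exists_deriv_nonneg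
  have hneg := neg_of_isLeast_zero hcont (h.deriv_Zk_neg hbdd) hτ
  obtain rfl := Tk_succ_eq_of_isLeast hτ
  refine ⟨⟨hTZ.trans hτ.1.1, fun r hr => ?_⟩, neg_one_pow_mul_eq_zero_iff.1 hτ.1.2⟩
  rcases lt_or_ge r (Zk u (i + 1) α) with hrZ | hrZ
  · exact deriv_neg_of_mem_branch (branch_eq_Ioo hne hbdd ▸ ⟨hr.1, hrZ⟩)
  · exact hneg r ⟨hrZ, hr.2⟩

end CrossesZero

lemma Tk_succ_eq {N : ℕ} {f : ℝ → ℝ} {u : ℝ → ℝ → ℝ} {i : ℕ} {α τ : ℝ} (hf : Function.Odd f)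
    (hu : Family (N + 1) f u) (hα : 0 < α) (hT : 0 ≤ Tk u i α) (hTτ : Tk u i α < τ)
    (hneg : ∀ r ∈ Ioo (Tk u i α) τ, (-1) ^ i * deriv (u α) r < 0) (hcrit : deriv (u α) τ = 0)
    (hstart : 0 < (-1) ^ i * u α (Tk u i α)) (hend : (-1) ^ i * u α τ < 0) :
    Tk u (i + 1) α = τ := by
  have hw := (hu.isRegularRadial hα).neg_one_pow_mul hf i
  obtain ⟨z, hz, hz0⟩ := intermediate_value_Ioo' hTτ.le
    (hw.continuousOn_Ici.mono fun r hr => hT.trans hr.1) ⟨hend, hstart⟩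
  have hZ : Zk u (i + 1) α = z :=
    Zk_succ_eq_of_apply_eq_zero hz.1 (fun r hr => ⟨hz0.symm.trans_lt
      (hw.strictAntiOn_Icc hT hneg ⟨hr.1.le, (hr.2.trans hz.2).le⟩ ⟨hz.1.le, hz.2.le⟩ hr.2),
      hneg r ⟨hr.1, hr.2.trans hz.2⟩⟩) (neg_one_pow_mul_eq_zero_iff.1 hz0)
  refine Tk_succ_eq_of_isLeast ⟨⟨hZ.trans_lt hz.2, by rw [hcrit, mul_zero]⟩, fun r hr => ?_⟩
  rw [hZ] at hr
  by_contra! hrτ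
  exact (hneg r ⟨hz.1.trans hr.1, hrτ⟩).ne hr.2

/-! ### Dependence on the initial value -/

/-- `T_i α` is an extremal point of `u α` with extremal value beyond `β`, on the side of zero
prescribed by the parity of `i`. -/
structure IsExtremalAt (β : ℝ) (u : ℝ → ℝ → ℝ) (i : ℕ) (α : ℝ) : Prop where
  nonneg : 0 ≤ Tk u i α
  deriv_eq_zero : deriv (u α) (Tk u i α) = 0
  beta_lt : β < (-1) ^ i * u α (Tk u i α)

/-- The `i`-th extremal point persists near the initial value `αs` and is continuous there. -/
structure StableAt (β : ℝ) (u : ℝ → ℝ → ℝ) (αs : ℝ) (i : ℕ) : Prop where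
  continuousAt : ContinuousAt (Tk u i) αs
  eventually_isExtremalAt : ∀ᶠ α in 𝓝 αs, IsExtremalAt β u i α

section Persistence

variable {N : ℕ} {f : ℝ → ℝ} {b β : ℝ} {u : ℝ → ℝ → ℝ} {i : ℕ} {α αs : ℝ}

lemma IsExtremalAt.succ (h : IsExtremalAt β u i α) (h1 : Hf1 f b β) (hu : Family (N + 1) f u)
    (hα : 0 < α) {p q : ℝ} (hTp : Tk u i α < p) (hpq : p ≤ q)
    (hneg : ∀ r ∈ Ioc (Tk u i α) p, (-1) ^ i * deriv (u α) r < 0)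
    (hq : (-1) ^ (i + 1) * deriv (u α) q < 0) (hβ : ∀ r ∈ Icc p q, β < (-1) ^ (i + 1) * u α r) :
    Tk u (i + 1) α ∈ Icc p q ∧ IsExtremalAt β u (i + 1) α ∧ Descends u i α := by
  have hw := (hu.isRegularRadial hα).neg_one_pow_mul h1.odd (i + 1)
  have hp0 : 0 < p := h.nonneg.trans_lt hTp
  have hflip : ∀ x : ℝ, (-1) ^ i * x < 0 ↔ 0 < (-1) ^ (i + 1) * x := fun x => by
    rw [pow_succ, mul_neg_one, neg_mul, neg_pos]
  have hp := (hflip _).1 (hneg p ⟨hTp, le_rfl⟩)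
  obtain ⟨τ, hτ, hcrit⟩ := intermediate_value_Icc' hpq
    (hw.continuousOn_deriv_Ici.mono fun r hr => hp0.le.trans hr.1) ⟨hq.le, hp.le⟩
  have hdesc : ∀ r ∈ Ioo (Tk u i α) τ, (-1) ^ i * deriv (u α) r < 0 := by
    intro r hr
    rcases le_or_gt r p with hrp | hrp
    · exact hneg r ⟨hr.1, hrp⟩
    · exact (hflip _).2 (hw.deriv_pos_of_critical_right hp0 hcrit (fun t ht =>
        h1.pos_of_beta_lt (hβ t ⟨ht.1.le, ht.2.le.trans hτ.2⟩)) r ⟨hrp.le, hr.2⟩)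
  have hcrit' := neg_one_pow_mul_eq_zero_iff.1 hcrit
  have hTτ := hTp.trans_le hτ.1
  obtain rfl := Tk_succ_eq h1.odd hu hα h.nonneg hTτ hdesc hcrit' (h1.beta_pos.trans h.beta_lt)
    (by simpa [pow_succ] using h1.beta_pos.trans (hβ τ hτ))
  exact ⟨hτ, ⟨hp0.le.trans hτ.1, hcrit', hβ _ hτ⟩, hTτ, hdesc⟩

namespace StableAt

lemma eventually_deriv_neg (h : StableAt β u αs i) (h1 : Hf1 f b β) (hu : Family (N + 1) f u)
    (hα : 0 < αs) : ∃ ε > 0, ∀ᶠ α in 𝓝 αs, Tk u i α < Tk u i αs + ε ∧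
      ∀ r ∈ Ioc (Tk u i α) (Tk u i αs + ε), (-1) ^ i * deriv (u α) r < 0 := by
  have hs := h.eventually_isExtremalAt.self_of_nhds
  obtain ⟨ε, hε, hβ⟩ := exists_eventually_forall_lt_of_continuousOn_prod (Ioi_mem_nhds hα)
    hs.nonneg (hu.continuousOn_neg_one_pow_mul i) hs.beta_lt
  refine ⟨ε, hε, ?_⟩
  filter_upwards [hβ, h.continuousAt.eventually (Ioo_mem_nhds (sub_lt_self _ hε)
    (lt_add_of_pos_right _ hε)), h.eventually_isExtremalAt, eventually_gt_nhds hα]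
    with α hβα hT hext hα0
  refine ⟨hT.2, ((hu.isRegularRadial hα0).neg_one_pow_mul h1.odd i).deriv_neg_of_critical_left
    hext.nonneg (by simp [hext.deriv_eq_zero]) fun r hr => h1.pos_of_beta_lt (hβα r ?_)⟩
  exact ⟨hext.nonneg.trans hr.1.le, (hT.1.trans hr.1).le, hr.2.le⟩

lemma eventually_deriv_neg_of_descends (h : StableAt β u αs i) (h1 : Hf1 f b β)
    (hu : Family (N + 1) f u) (hα : 0 < αs) (hd : Descends u i αs) {p : ℝ}
    (hTp : Tk u i αs < p) (hp : p < Tk u (i + 1) αs) : ∀ᶠ α in 𝓝 αs, Tk u i α < p ∧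
      ∀ r ∈ Ioc (Tk u i α) p, (-1) ^ i * deriv (u α) r < 0 := by
  have hT0 := h.eventually_isExtremalAt.self_of_nhds.nonneg
  obtain ⟨ε, hε, hnear⟩ := h.eventually_deriv_neg h1 hu hα
  have hK : Icc (Tk u i αs + ε) p ⊆ Ici 0 := fun r hr => by
    have := hr.1
    simp only [mem_Ici]
    linarith
  have hfar := eventually_forall_lt_of_tendstoUniformlyOn isCompact_Icc
    (((hu.isRegularRadial hα).neg_one_pow_mul h1.odd i).continuousOn_deriv_Ici.mono hK)
    (fun r hr => hd.deriv_neg r ⟨by linarith [hr.1], hr.2.trans_lt hp⟩)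
    (hu.tendstoUniformlyOn_deriv hα isCompact_Icc hK i)
  filter_upwards [hnear, hfar, h.continuousAt.eventually (gt_mem_nhds hTp)] with α hn hf hT
  refine ⟨hT, fun r hr => ?_⟩
  rcases le_total r (Tk u i αs + ε) with hrε | hrε
  · exact hn.2 r ⟨hr.1, hrε⟩
  · exact hf r ⟨hrε, hr.2⟩

lemma exists_eventually_succ_mem_Icc (h : StableAt β u αs i) (h1 : Hf1 f b β)
    (hu : Family (N + 1) f u) (hα : 0 < αs) (hd : Descends u i αs)
    (hs : IsExtremalAt β u (i + 1) αs) : ∃ ε₀ > 0, ∀ ε ∈ Ioo 0 ε₀, ∀ᶠ α in 𝓝 αs,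
      Tk u (i + 1) α ∈ Icc (Tk u (i + 1) αs - ε) (Tk u (i + 1) αs + ε) ∧
      IsExtremalAt β u (i + 1) α ∧ Descends u i α := by
  have hS0 := hs.nonneg
  obtain ⟨ε₀, hε₀, hβ⟩ := exists_eventually_forall_lt_of_continuousOn_prod (Ioi_mem_nhds hα)
    hS0 (hu.continuousOn_neg_one_pow_mul (i + 1)) hs.beta_lt
  refine ⟨min ε₀ (Tk u (i + 1) αs - Tk u i αs), lt_min hε₀ (sub_pos.2 hd.lt),
    fun ε ⟨hε, hlt⟩ => ?_⟩
  obtain ⟨hε0, hεT⟩ := lt_min_iff.1 hlt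
  have hw := (hu.isRegularRadial hα).neg_one_pow_mul h1.odd (i + 1)
  have hright : (-1) ^ (i + 1) * deriv (u αs) (Tk u (i + 1) αs + ε) < 0 :=
    hw.deriv_neg_of_critical_left hS0 (by simp [hs.deriv_eq_zero])
      (fun r hr => h1.pos_of_beta_lt (hβ.self_of_nhds r
        ⟨hS0.trans hr.1.le, by linarith [hr.1], by linarith [hr.2]⟩)) _
      ⟨lt_add_of_pos_right _ hε, le_rfl⟩
  have hq : Tk u (i + 1) αs + ε ∈ Ici 0 := add_nonneg hS0 hε.le
  have hend := ((hu.tendstoUniformlyOn_deriv hα isCompact_singleton (singleton_subset_iff.2 hq)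
    (i + 1)).tendsto_at rfl).eventually_lt_const hright
  filter_upwards [h.eventually_deriv_neg_of_descends h1 hu hα hd (p := Tk u (i + 1) αs - ε)
      (by linarith) (by linarith), hend, hβ, h.eventually_isExtremalAt, eventually_gt_nhds hα]
    with α hleft hend hβα hext hα0
  exact hext.succ h1 hu hα0 hleft.1 (by linarith) hleft.2 hend fun r hr =>
    hβα r ⟨hext.nonneg.trans (hleft.1.le.trans hr.1), by linarith [hr.1], by linarith [hr.2]⟩

lemma succ (h : StableAt β u αs i) (h1 : Hf1 f b β) (hu : Family (N + 1) f u) (hα : 0 < αs)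
    (hd : Descends u i αs) (hs : IsExtremalAt β u (i + 1) αs) :
    StableAt β u αs (i + 1) ∧ ∀ᶠ α in 𝓝 αs, Descends u i α := by
  obtain ⟨ε₀, hε₀, hev⟩ := h.exists_eventually_succ_mem_Icc h1 hu hα hd hs
  have hhalf := hev (ε₀ / 2) ⟨half_pos hε₀, half_lt_self hε₀⟩
  refine ⟨⟨Metric.continuousAt_iff'.2 fun ε hε => ?_, hhalf.mono fun α hα => hα.2.1⟩,
    hhalf.mono fun α hα => hα.2.2⟩
  obtain ⟨e, he, hlt⟩ := exists_between (lt_min hε hε₀)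
  filter_upwards [hev e ⟨he, hlt.trans_le (min_le_right _ _)⟩] with α hmem
  rw [← Real.closedBall_eq_Icc] at hmem
  exact hmem.1.trans_lt (hlt.trans_le (min_le_left _ _))

end StableAt

end Persistence

lemma setOf_zero_eq_image {X M : Type*} [LinearOrder X] [Zero M] {t : ℕ → X} {g : X → M} {m : ℕ}
    {A : X} (ht : MonotoneOn t (Iic m)) (hA : t m ≤ A) (hz : ∀ i ≤ m, g (t i) = 0)
    (hne : ∀ i < m, ∀ r ∈ Ioo (t i) (t (i + 1)), g r ≠ 0) (hne' : ∀ r ∈ Ioc (t m) A, g r ≠ 0) :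
    {r | r ∈ Icc (t 0) A ∧ g r = 0} = t '' Iic m := by
  refine Subset.antisymm (fun r ⟨hr, hr0⟩ => ?_) (image_subset_iff.2 fun i hi => ⟨⟨ht m.zero_le hi
    i.zero_le, (ht hi self_mem_Iic hi).trans hA⟩, hz i hi⟩)
  set i := Nat.findGreatest (fun j => t j ≤ r) m
  have him : i ≤ m := Nat.findGreatest_le m
  refine ⟨i, him, (Nat.findGreatest_spec (P := fun j => t j ≤ r) m.zero_le hr.1).eq_of_not_lt
    fun hlt => ?_⟩
  rcases him.lt_or_eq with h | h
  · exact hne i h r ⟨hlt, not_le.1 (Nat.findGreatest_is_greatest (P := fun j => t j ≤ r)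
      i.lt_succ_self h)⟩ hr0
  · exact hne' r ⟨h ▸ hlt, hr.2⟩ hr0

lemma not_isLocalMin_of_strictAntiOn {v : ℝ → ℝ} {x y : ℝ} (hxy : x < y)
    (hv : StrictAntiOn v (Icc x y)) : ¬IsLocalMin v x := fun hmin => by
  obtain ⟨r, hr, hle⟩ := (Eventually.and (Ioo_mem_nhdsGT hxy)
    (hmin.filter_mono nhdsWithin_le_nhds)).exists
  exact (hv (left_mem_Icc.2 hxy.le) (Ioo_subset_Icc_self hr) hr.1).not_ge hle

/-- `T_0 α, …, T_m α` are extremal points of `u α` with values beyond `β`, and `u α` is strictly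
monotone between them and from the last of them up to `A`. -/
structure HasExtremalChain (β : ℝ) (u : ℝ → ℝ → ℝ) (m : ℕ) (A α : ℝ) : Prop where
  isExtremalAt : ∀ i ≤ m, IsExtremalAt β u i α
  descends : ∀ i < m, Descends u i α
  lt : Tk u m α < A
  deriv_neg : ∀ r ∈ Ioc (Tk u m α) A, (-1) ^ m * deriv (u α) r < 0

lemma strictMonoOn_Tk {u : ℝ → ℝ → ℝ} {m : ℕ} {α : ℝ} (h : ∀ i < m, Descends u i α) :
    StrictMonoOn (fun i => Tk u i α) (Iic m) :=
  strictMonoOn_of_lt_add_one ordConnected_Iic fun i _ _ hi => (h i hi).lt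

namespace HasExtremalChain

variable {N m : ℕ} {f : ℝ → ℝ} {β A α : ℝ} {u : ℝ → ℝ → ℝ}

lemma extSet_eq_image (h : HasExtremalChain β u m A α) :
    ExtSet u α A = (fun i => Tk u i α) '' Iic m :=
  setOf_zero_eq_image (strictMonoOn_Tk h.descends).monotoneOn h.lt.le
    (fun i hi => (h.isExtremalAt i hi).deriv_eq_zero)
    (fun i hi r hr => right_ne_zero_of_mul ((h.descends i hi).deriv_neg r hr).ne)
    fun r hr => right_ne_zero_of_mul (h.deriv_neg r hr).ne

lemma finite_extSet (h : HasExtremalChain β u m A α) : (ExtSet u α A).Finite :=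
  h.extSet_eq_image ▸ (finite_Iic m).image _

lemma ncard_extSet (h : HasExtremalChain β u m A α) : (ExtSet u α A).ncard = m + 1 := by
  rw [h.extSet_eq_image, (strictMonoOn_Tk h.descends).injOn.ncard_image, ← Finset.coe_Iic,
    ncard_coe_finset, Nat.card_Iic]

lemma exists_strictAntiOn_Icc (h : HasExtremalChain β u m A α) (hf : Function.Odd f)
    (hu : Family (N + 1) f u) (hα : 0 < α) {i : ℕ} (hi : i ≤ m) :
    ∃ y > Tk u i α, StrictAntiOn (fun r => (-1) ^ i * u α r) (Icc (Tk u i α) y) := by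
  have hw := (hu.isRegularRadial hα).neg_one_pow_mul hf i
  have hT := (h.isExtremalAt i hi).nonneg
  rcases hi.lt_or_eq with hlt | rfl
  · exact ⟨_, (h.descends i hlt).lt, hw.strictAntiOn_Icc hT (h.descends i hlt).deriv_neg⟩
  · exact ⟨A, h.lt, hw.strictAntiOn_Icc hT fun r hr => h.deriv_neg r ⟨hr.1, hr.2.le⟩⟩

lemma extremal_value (h : HasExtremalChain β u m A α) (hf : Function.Odd f)
    (hu : Family (N + 1) f u) (hα : 0 < α) : ∀ r ∈ ExtSet u α A,
      (IsLocalMin (u α) r → u α r < -β) ∧ (IsLocalMax (u α) r → β < u α r) := by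
  rw [h.extSet_eq_image]
  rintro _ ⟨i, hi, rfl⟩
  obtain ⟨y, hy, hanti⟩ := h.exists_strictAntiOn_Icc hf hu hα hi
  have hβ := (h.isExtremalAt i hi).beta_lt
  have hnot := not_isLocalMin_of_strictAntiOn hy hanti
  rcases neg_one_pow_eq_or ℝ i with hsign | hsign <;>
    simp only [hsign, one_mul, neg_one_mul] at hβ hnot
  · exact ⟨fun hmin => absurd hmin hnot, fun _ => hβ⟩
  · exact ⟨fun _ => lt_neg.1 hβ, fun hmax => absurd hmax.neg hnot⟩

end HasExtremalChain

lemma IsRegularRadial.isFullBranch_Ioo {N : ℕ} {f v v' : ℝ → ℝ} {x y : ℝ} (hf : Continuous f)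
    (h : IsRegularRadial N f v v') (hx : 0 ≤ x) (hxy : x < y) (hneg : ∀ r ∈ Ioo x y, v' r < 0)
    (hvx : v' x = 0) (hvy : v' y = 0) (hfx : 0 < f (v x)) (hfy : f (v y) < 0) :
    IsFullBranch N f v v' (Ioo x y) (v y) (v x) := by
  have hy : 0 < y := hx.trans_lt hxy
  have hleft : ∀ {g : ℝ → ℝ}, ContinuousOn g (Ici 0) →
      Tendsto (fun r : Ioo x y => g r) atBot (𝓝 (g x)) := fun hg =>
    (tendsto_comp_coe_Ioo_atBot hxy).2
      ((hg x hx).mono_left (nhdsWithin_mono _ fun r hr => hx.trans (le_of_lt hr)))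
  have hright : ∀ {g : ℝ → ℝ}, ContinuousOn g (Ici 0) →
      Tendsto (fun r : Ioo x y => g r) atTop (𝓝 (g y)) := fun hg =>
    (tendsto_comp_coe_Ioo_atTop hxy).2
      ((hg.continuousAt (Ici_mem_nhds hy)).mono_left nhdsWithin_le_nhds)
  exact {
    radial := h.toIsRadial
    isOpen := isOpen_Ioo
    ordConnected := ordConnected_Ioo
    nonempty := nonempty_Ioo.2 hxy
    pos := fun r hr => hx.trans_lt hr.1
    deriv_neg := hneg
    tendsto_left := hleft h.continuousOn_Ici
    tendsto_deriv_left := hvx ▸ hleft h.continuousOn_deriv_Ici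
    tendsto_right := hright h.continuousOn_Ici
    tendsto_deriv_right := hvy ▸ hright h.continuousOn_deriv_Ici
    force_nonneg := (hf.continuousAt.continuousWithinAt.eventually_const_lt hfx).mono
      fun _ => le_of_lt
    force_nonpos := (hf.continuousAt.continuousWithinAt.eventually_lt_const hfy).mono
      fun _ => le_of_lt }

section Crossing

variable {N : ℕ} {f : ℝ → ℝ} {b β : ℝ} {u : ℝ → ℝ → ℝ} {i : ℕ} {αs : ℝ}

lemma IsFullBranch.exists_eventually_family_eq {I : Set ℝ} {σ τ : ℝ} (hf : Continuous f)
    (hodd : Function.Odd f) (hN : 0 < N) (hu : Family (N + 1) f u) (hα : 0 < αs)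
    (h : IsFullBranch N f (fun r => (-1) ^ i * u αs r) (fun r => (-1) ^ i * deriv (u αs) r) I σ τ) :
    ∃ x ∈ I, ∃ y ∈ I, ∀ᶠ q in 𝓝 αs ×ˢ 𝓝 αs, ∃ t ∈ Icc x y, u q.1 t = u q.2 t := by
  obtain ⟨x, hx, y, hy, hcross⟩ := h.exists_eventually_eq (Nat.cast_pos.2 hN) hf
  have hK : Icc x y ⊆ Ici 0 := fun r hr => (mem_Ioi.1 (h.pos hx)).le.trans hr.1
  refine ⟨x, hx, y, hy, (hcross ?_ (hu.tendstoUniformlyOn hα isCompact_Icc hK i)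
    (hu.tendstoUniformlyOn_deriv hα isCompact_Icc hK i)).mono
    fun q ⟨t, ht, heq⟩ => ⟨t, ht, neg_one_pow_mul_right_inj.1 heq⟩⟩
  filter_upwards [eventually_gt_nhds hα] with α hα0
    using (hu.isRegularRadial hα0).toIsRadial.neg_one_pow_mul hodd i

lemma Descends.eventually_eq_between (hf : Continuous f) (h1 : Hf1 f b β) (hN : 0 < N)
    (hu : Family (N + 1) f u) (hα : 0 < αs) (hd : Descends u i αs) (h : StableAt β u αs i)
    (h' : StableAt β u αs (i + 1)) : ∀ᶠ q in 𝓝 αs ×ˢ 𝓝 αs,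
      ∃ t, max (Tk u i q.1) (Tk u i q.2) < t ∧
        t < min (Tk u (i + 1) q.1) (Tk u (i + 1) q.2) ∧ u q.1 t = u q.2 t := by
  have hT := h.eventually_isExtremalAt.self_of_nhds
  have hS := h'.eventually_isExtremalAt.self_of_nhds
  have hend : (-1) ^ i * u αs (Tk u (i + 1) αs) < -β := by
    have := hS.beta_lt
    rwa [pow_succ, mul_neg_one, neg_mul, lt_neg] at this
  obtain ⟨x, hx, y, hy, hcross⟩ := (((hu.isRegularRadial hα).neg_one_pow_mul h1.odd
    i).isFullBranch_Ioo hf hT.nonneg hd.lt hd.deriv_neg (by simp [hT.deriv_eq_zero])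
    (by simp [hS.deriv_eq_zero]) (h1.pos_of_beta_lt hT.beta_lt)
    (h1.neg_of_lt_neg_beta hend)).exists_eventually_family_eq hf h1.odd hN hu hα
  have hnear := (h.continuousAt.eventually (gt_mem_nhds hx.1)).and
    (h'.continuousAt.eventually (lt_mem_nhds hy.2))
  filter_upwards [hcross, hnear.prod_mk hnear] with q ⟨t, ht, heq⟩ ⟨⟨hT₁, hS₁⟩, hT₂, hS₂⟩
  exact ⟨t, (max_lt hT₁ hT₂).trans_le ht.1, ht.2.trans_lt (lt_min hS₁ hS₂), heq⟩

lemma IsExtremalAt.eventually_eq_last (hf : Continuous f) (h1 : Hf1 f b β) (hN : 0 < N)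
    (hu : Family (N + 1) f u) (hα : 0 < αs) (h : IsExtremalAt β u i αs)
    (hz : uAtZ u (i + 1) αs = 0) (hdz : duAtZ u (i + 1) αs = 0) : ∀ᶠ q in 𝓝 αs ×ˢ 𝓝 αs,
      ∃ t, Tk u i αs < t ∧ (BddAbove (ZsetK u (i + 1) αs) → t < Zk u (i + 1) αs) ∧
        u q.1 t = u q.2 t := by
  obtain ⟨x, hx, y, hy, hcross⟩ := (hu.isFullBranch_branch h1 hN hα h.nonneg h.deriv_eq_zero
    h.beta_lt hz hdz).exists_eventually_family_eq hf h1.odd hN hu hα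
  filter_upwards [hcross] with q ⟨t, ht, heq⟩
  exact ⟨t, hx.1.trans_le ht.1, fun hbdd => ht.2.trans_lt (lt_Zk_of_mem_branch hy hbdd), heq⟩

end Crossing

section GroundState

variable {N m : ℕ} {f : ℝ → ℝ} {b β : ℝ} {u : ℝ → ℝ → ℝ} {αs : ℝ}

lemma Tk_nonneg_and_deriv_eq_zero (h1 : Hf1 f b β) (hN : 0 < N) (hu : Family (N + 1) f u)
    (hα : 0 < αs) (hcross : ∀ i < m, CrossesZero u i αs) :
    ∀ i ≤ m, 0 ≤ Tk u i αs ∧ deriv (u αs) (Tk u i αs) = 0 := by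
  intro i
  induction i with
  | zero => exact fun _ => ⟨le_rfl, hu.deriv_zero hα⟩
  | succ i ih =>
    intro hi
    obtain ⟨hT, -⟩ := ih (Nat.le_of_succ_le hi)
    obtain ⟨hd, hcrit⟩ := (hcross i hi).descends h1 hN hu hα hT
    exact ⟨hT.trans hd.lt.le, hcrit⟩

lemma descends_of_mem_Gk (h1 : Hf1 f b β) (hN : 0 < N) (hu : Family (N + 1) f u)
    (hG : αs ∈ Gk u (m + 1)) : ∀ i < m, Descends u i αs := fun i hi =>
  let ⟨hα, hcross, _⟩ := mem_Gk_succ hG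
  ((hcross i hi).descends h1 hN hu hα
    (Tk_nonneg_and_deriv_eq_zero h1 hN hu hα hcross i hi.le).1).1

lemma isExtremalAt_of_mem_Gk (hf : Continuous f) (h1 : Hf1 f b β) (hN : 0 < N)
    (hu : Family (N + 1) f u) (hG : αs ∈ Gk u (m + 1)) : ∀ i ≤ m, IsExtremalAt β u i αs := by
  intro i hi
  obtain ⟨hα, hcross, hz, hdz⟩ := mem_Gk_succ hG
  have hcrit := Tk_nonneg_and_deriv_eq_zero h1 hN hu hα hcross
  obtain ⟨hT, hd⟩ := hcrit i hi
  obtain ⟨hTm, hdm⟩ := hcrit m le_rfl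
  have hmono : Tk u i αs ≤ Tk u m αs :=
    (strictMonoOn_Tk (descends_of_mem_Gk h1 hN hu hG)).monotoneOn hi self_mem_Iic hi
  have hzi : uAtZ u (i + 1) αs = 0 := by
    rcases hi.lt_or_eq with hlt | rfl
    · exact (hcross i hlt).uAtZ_eq_zero
    · exact hz
  have hpos := hu.Fint_Tk_pos hf h1 hN hα hTm hdm hz hdz
  have henergy := (hu.isRegularRadial hα).energy_antitoneOn hf hT hTm hmono
  rw [Fint_neg_one_pow_mul_of_odd h1.odd] at hpos
  simp only [hd, hdm, zero_pow two_ne_zero, zero_div, zero_add] at henergy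
  refine ⟨hT, hd, h1.beta_lt_of_Fint_pos hf (hu.apply_Tk_nonneg h1.odd hα hT hzi) ?_⟩
  rw [Fint_neg_one_pow_mul_of_odd h1.odd]
  exact hpos.trans_le henergy

lemma stableAt_zero (hu : Family (N + 1) f u) (hα : 0 < αs) (h : IsExtremalAt β u 0 αs) :
    StableAt β u αs 0 := by
  have hT : ∀ α, Tk u 0 α = 0 := fun _ => rfl
  have hβ := h.beta_lt
  rw [hT, hu.apply_zero hα, pow_zero, one_mul] at hβ
  refine ⟨continuousAt_const, ?_⟩
  filter_upwards [eventually_gt_nhds hα, eventually_gt_nhds hβ] with α hα0 hβα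
  refine ⟨le_rfl, hu.deriv_zero hα0, ?_⟩
  rwa [hT, hu.apply_zero hα0, pow_zero, one_mul]

lemma stableAt_of_mem_Gk (hf : Continuous f) (h1 : Hf1 f b β) (hN : 0 < N)
    (hu : Family (N + 1) f u) (hG : αs ∈ Gk u (m + 1)) : ∀ i ≤ m, StableAt β u αs i := by
  obtain ⟨hα, -⟩ := mem_Gk_succ hG
  have hext := isExtremalAt_of_mem_Gk hf h1 hN hu hG
  have hdesc := descends_of_mem_Gk h1 hN hu hG
  intro i
  induction i with
  | zero => exact fun h0 => stableAt_zero hu hα (hext 0 h0)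
  | succ i ih =>
    exact fun hi => ((ih (Nat.le_of_succ_le hi)).succ h1 hu hα (hdesc i hi) (hext (i + 1) hi)).1

lemma exists_eventually_hasExtremalChain (hf : Continuous f) (h1 : Hf1 f b β) (hN : 0 < N)
    (hu : Family (N + 1) f u) (hG : αs ∈ Gk u (m + 1)) :
    ∃ a > 0, ∀ᶠ α in 𝓝 αs, HasExtremalChain β u m (Tk u m αs + a) α := by
  obtain ⟨hα, -⟩ := mem_Gk_succ hG
  have hstable := stableAt_of_mem_Gk hf h1 hN hu hG
  have hext := (eventually_all_finite (finite_Iic m)).2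
    fun i hi => (hstable i hi).eventually_isExtremalAt
  have hdesc := (eventually_all_finite (finite_Iio m)).2 fun i hi =>
    ((hstable i (le_of_lt hi)).succ h1 hu hα (descends_of_mem_Gk h1 hN hu hG i hi)
      (isExtremalAt_of_mem_Gk hf h1 hN hu hG (i + 1) hi)).2
  obtain ⟨a, ha, hlast⟩ := (hstable m le_rfl).eventually_deriv_neg h1 hu hα
  refine ⟨a, ha, ?_⟩
  filter_upwards [hext, hdesc, hlast] with α hextα hdescα ⟨hlt, hneg⟩
  exact ⟨hextα, hdescα, hlt, hneg⟩

lemma eventually_crossings_of_mem_Gk (hf : Continuous f) (h1 : Hf1 f b β) (hN : 0 < N)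
    (hu : Family (N + 1) f u) (hG : αs ∈ Gk u (m + 1)) : ∀ᶠ q in 𝓝 αs ×ˢ 𝓝 αs,
      (∀ i < m, ∃ t, max (Tk u i q.1) (Tk u i q.2) < t ∧
        t < min (Tk u (i + 1) q.1) (Tk u (i + 1) q.2) ∧ u q.1 t = u q.2 t) ∧
      ∃ t, Tk u m αs < t ∧ (BddAbove (ZsetK u (m + 1) αs) → t < Zk u (m + 1) αs) ∧
        u q.1 t = u q.2 t := by
  obtain ⟨hα, -, hz, hdz⟩ := mem_Gk_succ hG
  have hstable := stableAt_of_mem_Gk hf h1 hN hu hG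
  exact ((eventually_all_finite (finite_Iio m)).2 fun i hi =>
      (descends_of_mem_Gk h1 hN hu hG i hi).eventually_eq_between hf h1 hN hu hα
        (hstable i (le_of_lt hi)) (hstable (i + 1) hi)).and
    ((isExtremalAt_of_mem_Gk hf h1 hN hu hG m le_rfl).eventually_eq_last hf h1 hN hu hα hz hdz)

end GroundState

theorem delta_one_lemma_general (n : ℕ) (hn : 2 ≤ n) (f : ℝ → ℝ) (b β : ℝ) (hf : Continuous f)
    (h1 : Hf1 f b β) (u : ℝ → ℝ → ℝ) (hu : Family n f u) (k : ℕ) (αs : ℝ) (hαs : αs ∈ Gk u k) :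
    ∃ a δ₁ : ℝ, DeltaOneLemma f β u k αs a δ₁ := by
  obtain ⟨N, rfl⟩ : ∃ N, n = N + 1 := ⟨n - 1, by omega⟩
  rcases k with _ | m
  · exact hαs.elim
  have hN : 0 < N := by omega
  obtain ⟨hα, -⟩ := mem_Gk_succ hαs
  obtain ⟨a, ha, hchain⟩ := exists_eventually_hasExtremalChain hf h1 hN hu hαs
  obtain ⟨δ, hδ, hnear⟩ := (nhds_basis_Ioo_pos αs).prod_self.eventually_iff.1
    ((eventually_crossings_of_mem_Gk hf h1 hN hu hαs).and
      ((hchain.and (eventually_gt_nhds hα)).prod_inl (𝓝 αs)))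
  refine ⟨a, δ, ha, hδ, fun α hαδ => ?_, fun α₁ h₁ α₂ h₂ _ => ?_⟩
  · obtain ⟨-, hc, hα0⟩ := hnear (mk_mem_prod hαδ hαδ)
    exact ⟨hc.finite_extSet, hc.ncard_extSet, hc.extremal_value h1.odd hu hα0⟩
  · obtain ⟨⟨hbetween, hlast⟩, -⟩ := hnear (mk_mem_prod h₁ h₂)
    refine ⟨fun i hi him => ?_, hlast⟩
    obtain ⟨j, rfl⟩ := Nat.exists_eq_add_of_le' hi
    exact hbetween j him

/-- **Lemma 4.1 (the δ₁-lemma).** Under (f1), (f2), if `α* ∈ G_k` then there are `a > 0`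
and `δ₁ > 0` such that every solution with initial value in `(α*-δ₁, α*+δ₁)` has exactly
`k` extremal points in `[0, T_{k-1}(α*) + a]`, with minimum values `< -β` and maximum
values `> β`; moreover two such solutions intersect between any two of their consecutive
extremal points, and in `(T_{k-1}(α*), Z_k(α*))`. -/
theorem delta_one_lemma
    (n : ℕ) (hn : 2 ≤ n)
    (f : ℝ → ℝ) (b β : ℝ) (hf : Continuous f)
    (h1 : Hf1 f b β) (h2 : Hf2 f)
    (u : ℝ → ℝ → ℝ) (hu : Family n f u)
    (k : ℕ) (hk : 1 ≤ k) (αs : ℝ) (hαs : αs ∈ Gk u k) :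
    ∃ a δ₁ : ℝ, DeltaOneLemma f β u k αs a δ₁ :=
  delta_one_lemma_general n hn f b β hf h1 u hu k αs hαs
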